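/- arXiv:2603.21790 — 2 statements merged into one kernel-verified Lean document; each statement's English description precedes it below -/
import Mathlib

section
/- Let P, Q, R, S ⊆ ℝ³ be finite sets such that all points of P ∪ Q ∪ R ∪ S have pairwise distinct coordinate values in each of the three axes, and let ◁₁, ◁₂, ◁₃ be generalized dominance relations. Then the number of distinct sets in the family {N³[s] : s ∈ S} is at most (|P| + 1)¹⁷¹. -/
/-- The three possible coordinate relations: `<`, `>`, or the always-true relation. -/
inductive CoordRel
  | lt
  | gt
  | top

/-- Interpretation of a coordinate relation on real numbers. -/
def CoordRel.holds : CoordRel → ℝ → ℝ → Prop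
  | .lt, a, b => a < b
  | .gt, a, b => b < a
  | .top, _, _ => True

/-- A generalized dominance relation on `ℝ³`: `p ◁ q` iff in each of the three
coordinates a fixed relation (`<`, `>`, or always-true) holds. -/
def IsGenDom (rel : (Fin 3 → ℝ) → (Fin 3 → ℝ) → Prop) : Prop :=
  ∃ R : Fin 3 → CoordRel, ∀ p q, rel p q ↔ ∀ i, (R i).holds (p i) (q i)

/-- `A` and `B` are separated in coordinate `i`: some threshold `μ` has all of `A`
strictly below and all of `B` strictly above in coordinate `i`, or vice versa. -/
def SepAt (i : Fin 3) (A B : Set (Fin 3 → ℝ)) : Prop :=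
  ∃ μ : ℝ, ((∀ a ∈ A, a i < μ) ∧ ∀ b ∈ B, μ < b i) ∨
    ((∀ b ∈ B, b i < μ) ∧ ∀ a ∈ A, μ < a i)

/-- `N³[s] = {p ∈ P : ∃ q ∈ Q, r ∈ R with p ◁₁ q, q ◁₂ r and r ◁₃ s}`. -/
def N3 (P Q R : Set (Fin 3 → ℝ)) (d₁ d₂ d₃ : (Fin 3 → ℝ) → (Fin 3 → ℝ) → Prop)
    (s : Fin 3 → ℝ) : Set (Fin 3 → ℝ) :=
  {p ∈ P | ∃ q ∈ Q, ∃ r ∈ R, d₁ p q ∧ d₂ q r ∧ d₃ r s}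

/-- `A` is shattered by a family `F` of sets. -/
def Shatters {α : Type*} (F : Set (Set α)) (A : Set α) : Prop :=
  ∀ B ⊆ A, ∃ S ∈ F, S ∩ A = B

/-!
By the Sauer–Shelah lemma it suffices that no 169 points of `P` are shattered. If a shattered set is
cut at a value of one coordinate, then its lower part is shattered by the sets `N³[s]` with `s`
above the cut, or its upper part by those with `s` below. Cutting in all three coordinates confines
the points `p` of a shattered set to one octant and the points `s` to the opposite one.

Every path `p, q, r, s` then crosses each of the cuts, and for a link that crosses a cut the
relation in that coordinate is forced by the sides alone. Choosing one forced link per coordinate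
writes `N³[s]` as a union of at most 27 terms. If two coordinates choose the same link, then that
link retains at most one comparison of coordinates; it is a Ferrers relation, and so is the term,
which therefore contributes at most one point to a shattered set. Otherwise every link retains two
comparisons, adjacent links share a coordinate, and all induced 2-matchings of the term are
oriented alike. Such a term shatters no three points, so a union of at most six of them has few
traces.

In each coordinate there is a direction in which the forced link can be fixed in advance, which
leaves `3 ^ j` terms if `j` coordinates are crossed in the other direction. The eight octants then
rule out shattering as soon as they contain 3 (`j = 0`), 5 (`j = 1`), 21 (`j = 2`) and 88 (`j = 3`)
points, and `3 + 3 * 5 + 3 * 21 + 88 = 169`.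
-/

section SauerShelah

variable {α β τ : Type*}

theorem Shatters.mono {F : Set (Set α)} {A C : Set α} (h : Shatters F A) (hCA : C ⊆ A) :
    Shatters F C := by
  intro B hB
  obtain ⟨X, hX, hXA⟩ := h B (hB.trans hCA)
  refine ⟨X, hX, ?_⟩
  rw [← Set.inter_eq_right.2 hCA, ← Set.inter_assoc, hXA, Set.inter_eq_left.2 hB]

theorem Shatters.image_congr {N M : β → Set α} {T : Set β} {A : Set α}
    (h : Shatters (N '' T) A) (hNM : ∀ s ∈ T, N s ∩ A = M s ∩ A) : Shatters (M '' T) A := by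
  intro B hB
  obtain ⟨_, ⟨s, hs, rfl⟩, hsB⟩ := h B hB
  exact ⟨M s, ⟨s, hs, rfl⟩, hNM s hs ▸ hsB⟩

theorem Shatters.or_of_subset_union {F F₁ F₂ : Set (Set α)} {A A₁ A₂ : Set α}
    (h : Shatters F A) (hF : F ⊆ F₁ ∪ F₂) (h₁ : A₁ ⊆ A) (h₂ : A₂ ⊆ A) (hd : Disjoint A₁ A₂) :
    Shatters F₁ A₁ ∨ Shatters F₂ A₂ := by
  by_contra! hcon
  simp only [Shatters, not_forall, not_exists, not_and] at hcon
  obtain ⟨⟨B₁, hB₁, hn₁⟩, ⟨B₂, hB₂, hn₂⟩⟩ := hcon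
  obtain ⟨X, hX, hXA⟩ := h (B₁ ∪ B₂) (Set.union_subset (hB₁.trans h₁) (hB₂.trans h₂))
  have trace_eq {A' : Set α} (hA' : A' ⊆ A) : X ∩ A' = B₁ ∩ A' ∪ B₂ ∩ A' := by
    rw [← Set.union_inter_distrib_right, ← hXA, Set.inter_assoc, Set.inter_eq_right.2 hA']
  rcases hF hX with hX | hX
  · refine hn₁ X hX ?_
    rw [trace_eq h₁, Set.inter_eq_left.2 hB₁, (hd.symm.mono_left hB₂).inter_eq, Set.union_empty]
  · refine hn₂ X hX ?_
    rw [trace_eq h₂, Set.inter_eq_left.2 hB₂, (hd.mono_left hB₁).inter_eq, Set.empty_union]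

theorem Shatters.two_pow_card_le_ncard_trace {F : Set (Set α)} {A : Finset α}
    (h : Shatters F A) : 2 ^ A.card ≤ ((· ∩ (A : Set α)) '' F).ncard := by
  have htrace : (· ∩ (A : Set α)) '' F ⊆ 𝒫 A := by
    rintro _ ⟨X, -, rfl⟩
    exact Set.inter_subset_right
  rw [← Set.ncard_coe_finset, ← Set.ncard_powerset (A : Set α)]
  exact Set.ncard_le_ncard h (A.finite_toSet.finite_subsets.subset htrace)

theorem card_shatterer_le_sum_choose [DecidableEq α] {𝒜 : Finset (Finset α)} {A : Finset α} {d : ℕ}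
    (hA : ∀ B ∈ 𝒜, B ⊆ A) (hd : ∀ C ⊆ A, C.card = d + 1 → ¬ 𝒜.Shatters C) :
    𝒜.shatterer.card ≤ ∑ k ∈ Finset.range (d + 1), A.card.choose k := by
  have hsub : 𝒜.shatterer ⊆ (Finset.range (d + 1)).biUnion A.powersetCard := by
    intro C hC
    rw [Finset.mem_shatterer] at hC
    have hCA : C ⊆ A := by
      obtain ⟨B, hB, hCB⟩ := hC.exists_superset
      exact hCB.trans (hA B hB)
    have hCd : C.card < d + 1 := by
      by_contra! hlt
      obtain ⟨D, hDC, hD⟩ := Finset.exists_subset_card_eq hlt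
      exact hd D (hDC.trans hCA) hD (hC.mono_right hDC)
    exact Finset.mem_biUnion.2
      ⟨C.card, Finset.mem_range.2 hCd, Finset.mem_powersetCard.2 ⟨hCA, rfl⟩⟩
  calc 𝒜.shatterer.card
      ≤ ∑ k ∈ Finset.range (d + 1), (A.powersetCard k).card :=
        (Finset.card_le_card hsub).trans Finset.card_biUnion_le
    _ = ∑ k ∈ Finset.range (d + 1), A.card.choose k := by simp only [Finset.card_powersetCard]

theorem ncard_trace_le_sum_choose {F : Set (Set α)} {A : Finset α} {d : ℕ}
    (hd : ∀ C ⊆ A, C.card = d + 1 → ¬ Shatters F C) :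
    ((· ∩ (A : Set α)) '' F).ncard ≤ ∑ k ∈ Finset.range (d + 1), A.card.choose k := by
  classical
  let 𝒜 : Finset (Finset α) := A.powerset.filter fun B => ∃ X ∈ F, X ∩ A = B
  have htrace : (· ∩ (A : Set α)) '' F ⊆ (fun B : Finset α => (B : Set α)) '' 𝒜 := by
    rintro _ ⟨X, hX, rfl⟩
    have hcoe : ((A.filter (· ∈ X) : Finset α) : Set α) = X ∩ A := by
      ext; simp [and_comm]
    exact ⟨A.filter (· ∈ X),
      Finset.mem_filter.2 ⟨Finset.mem_powerset.2 (A.filter_subset _), X, hX, hcoe.symm⟩, hcoe⟩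
  have hshatters : ∀ C ⊆ A, C.card = d + 1 → ¬ 𝒜.Shatters C := by
    refine fun C hCA hC h𝒜 => hd C hCA hC fun B hB => ?_
    lift B to Finset α using C.finite_toSet.subset hB
    obtain ⟨Y, hY, hYB⟩ := h𝒜 (Finset.coe_subset.1 hB)
    obtain ⟨X, hX, hXY⟩ := (Finset.mem_filter.1 hY).2
    refine ⟨X, hX, ?_⟩
    rw [← hYB, Finset.coe_inter, ← hXY, Set.inter_left_comm,
      Set.inter_eq_left.2 (Finset.coe_subset.2 hCA)]
  calc ((· ∩ (A : Set α)) '' F).ncard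
      ≤ 𝒜.card := by
        rw [← Set.ncard_coe_finset 𝒜]
        exact (Set.ncard_le_ncard htrace (𝒜.finite_toSet.image _)).trans
          (Set.ncard_image_le 𝒜.finite_toSet)
    _ ≤ 𝒜.shatterer.card := Finset.card_le_card_shatterer 𝒜
    _ ≤ ∑ k ∈ Finset.range (d + 1), A.card.choose k :=
        card_shatterer_le_sum_choose
          (fun B hB => Finset.mem_powerset.1 (Finset.mem_filter.1 hB).1) hshatters

theorem sum_range_choose_le_pow (n d : ℕ) :
    ∑ k ∈ Finset.range (d + 1), n.choose k ≤ (n + 1) ^ d := by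
  rw [add_pow]
  refine Finset.sum_le_sum fun k hk => ?_
  have hkd : k ≤ d := Finset.mem_range_succ_iff.1 hk
  calc n.choose k
      ≤ n ^ k := Nat.choose_le_pow n k
    _ ≤ n ^ k * 1 ^ (d - k) * d.choose k := by
        rw [one_pow, mul_one]
        exact Nat.le_mul_of_pos_right _ (Nat.choose_pos hkd)

theorem ncard_trace_union_le (N M : β → Set α) (T : Set β) (A : Finset α) :
    ((· ∩ (A : Set α)) '' ((fun s => N s ∪ M s) '' T)).ncard ≤
      ((· ∩ (A : Set α)) '' (N '' T)).ncard * ((· ∩ (A : Set α)) '' (M '' T)).ncard := by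
  have hfin (K : β → Set α) : ((· ∩ (A : Set α)) '' (K '' T)).Finite :=
    A.finite_toSet.finite_subsets.subset (by rintro _ ⟨X, -, rfl⟩; exact Set.inter_subset_right)
  have hsub : (· ∩ (A : Set α)) '' ((fun s => N s ∪ M s) '' T) ⊆
      (fun X : Set α × Set α => X.1 ∪ X.2) ''
        (((· ∩ (A : Set α)) '' (N '' T)) ×ˢ ((· ∩ (A : Set α)) '' (M '' T))) := by
    rintro _ ⟨_, ⟨s, hs, rfl⟩, rfl⟩
    exact ⟨(N s ∩ A, M s ∩ A), ⟨⟨N s, ⟨s, hs, rfl⟩, rfl⟩, ⟨M s, ⟨s, hs, rfl⟩, rfl⟩⟩,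
      (Set.union_inter_distrib_right _ _ _).symm⟩
  have hprod := (hfin N).prod (hfin M)
  rw [← Set.ncard_prod]
  exact (Set.ncard_le_ncard hsub (hprod.image _)).trans (Set.ncard_image_le hprod)

theorem ncard_trace_iUnion_le {N : τ → β → Set α} {T : Set β} {A : Finset α} {ℋ : Finset τ} {b : ℕ}
    (hb : ∀ t ∈ ℋ, ((· ∩ (A : Set α)) '' (N t '' T)).ncard ≤ b) :
    ((· ∩ (A : Set α)) '' ((fun s => ⋃ t ∈ ℋ, N t s) '' T)).ncard ≤ b ^ ℋ.card := by
  classical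
  induction ℋ using Finset.induction_on with
  | empty =>
    refine (Set.ncard_le_ncard (t := {∅}) ?_).trans (by simp)
    rintro _ ⟨_, ⟨s, -, rfl⟩, rfl⟩
    simp
  | insert t ℋ ht ih =>
    rw [Finset.forall_mem_insert] at hb
    simp only [Finset.set_biUnion_insert]
    rw [Finset.card_insert_of_notMem ht, pow_succ']
    exact (ncard_trace_union_le _ _ T A).trans (Nat.mul_le_mul hb.1 (ih hb.2))

end SauerShelah

section InducedMatchings

variable {α β τ : Type*}

/-- `p₁ s₁` and `p₂ s₂` form an induced 2-matching in the bipartite graph of `H`. -/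
def IsInducedMatching (H : α → β → Prop) (p₁ p₂ : α) (s₁ s₂ : β) : Prop :=
  H p₁ s₁ ∧ H p₂ s₂ ∧ ¬ H p₁ s₂ ∧ ¬ H p₂ s₁

/-- A Ferrers relation: its bipartite graph contains no induced 2-matching. -/
def IsFerrers (H : α → β → Prop) : Prop :=
  ∀ ⦃p₁ p₂ s₁ s₂⦄, ¬ IsInducedMatching H p₁ p₂ s₁ s₂

/-- All induced 2-matchings of `H` are oriented alike by the keys `f` and `g`: the sign of
`(f p₁ - f p₂) * (g s₁ - g s₂)` is nonzero and the same, namely that of `ε`, for all of them. -/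
def IsMatchingMonotone (f : α → ℝ) (g : β → ℝ) (H : α → β → Prop) : Prop :=
  ∃ ε : ℝ, ∀ ⦃p₁ p₂ s₁ s₂⦄, IsInducedMatching H p₁ p₂ s₁ s₂ →
    0 < ε * ((f p₁ - f p₂) * (g s₁ - g s₂))

theorem IsFerrers.isMatchingMonotone {H : α → β → Prop} (h : IsFerrers H) (f : α → ℝ) (g : β → ℝ) :
    IsMatchingMonotone f g H :=
  ⟨0, fun _ _ _ _ hm => (h hm).elim⟩

theorem IsFerrers.exists_forall_imp {H : α → β → Prop} (h : IsFerrers H) {A : Finset α}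
    (hA : A.Nonempty) : ∃ e ∈ A, ∀ a ∈ A, ∀ s, H a s → H e s := by
  obtain ⟨e, he, hmax⟩ := A.exists_maximalFor (fun a => {s | H a s}) hA
  refine ⟨e, he, fun a ha s has => ?_⟩
  by_contra hes
  refine hes (hmax ha (fun s' hes' => ?_) has)
  by_contra has'
  exact h ⟨has, hes', has', hes⟩

-- A set avoiding a dominating element of `N` avoids all of `A ∩ N s`, so `M` alone realizes it.
theorem IsFerrers.exists_shatters_erase [DecidableEq α] {N M : β → Set α} {T : Set β}
    (hN : IsFerrers fun a s => a ∈ N s) {A : Finset α} (hA : A.Nonempty)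
    (h : Shatters ((fun s => N s ∪ M s) '' T) A) :
    ∃ e ∈ A, Shatters (M '' T) (A.erase e : Finset α) := by
  obtain ⟨e, he, hdom⟩ := hN.exists_forall_imp hA
  refine ⟨e, he, fun B hB => ?_⟩
  obtain ⟨_, ⟨s, hs, rfl⟩, hsB⟩ := h B (hB.trans (Finset.coe_subset.2 (A.erase_subset e)))
  have heB : e ∉ B := fun heB => by simpa using hB heB
  have hdisj : ∀ a ∈ A, a ∉ N s := fun a ha has =>
    heB (hsB ▸ ⟨Or.inl (hdom a ha s has), he⟩)
  refine ⟨M s, ⟨s, hs, rfl⟩, ?_⟩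
  ext a
  have hmem := Set.ext_iff.1 hsB a
  simp only [Set.mem_inter_iff, Set.mem_union, Finset.coe_erase, Set.mem_sdiff, Finset.mem_coe,
    Set.mem_singleton_iff] at hmem ⊢
  grind

theorem exists_subset_shatters_of_isFerrers {N : τ → β → Set α} {M : β → Set α} {T : Set β}
    {A : Finset α} {𝒞 : Finset τ} (hN : ∀ t ∈ 𝒞, IsFerrers fun a s => a ∈ N t s)
    (hcard : 𝒞.card ≤ A.card) (h : Shatters ((fun s => (⋃ t ∈ 𝒞, N t s) ∪ M s) '' T) A) :
    ∃ D ⊆ A, D.card + 𝒞.card = A.card ∧ Shatters (M '' T) D := by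
  classical
  induction 𝒞 using Finset.induction_on generalizing A with
  | empty => exact ⟨A, subset_rfl, by simp, by simpa using h⟩
  | insert t 𝒞 ht ih =>
    rw [Finset.forall_mem_insert] at hN
    rw [Finset.card_insert_of_notMem ht] at hcard ⊢
    simp only [Finset.set_biUnion_insert, Set.union_assoc] at h
    obtain ⟨e, he, hshat⟩ := hN.1.exists_shatters_erase (Finset.card_pos.1 (by omega)) h
    have hcard_erase := Finset.card_erase_add_one he
    obtain ⟨D, hDA, hD, hshatD⟩ := ih hN.2 (by omega) hshat
    exact ⟨D, hDA.trans (A.erase_subset e), by omega, hshatD⟩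

theorem IsMatchingMonotone.mul_neg_of_shatters {f : α → ℝ} {g : β → ℝ} {N : β → Set α}
    {T : Set β} (hN : IsMatchingMonotone f g fun a s => a ∈ N s) {C : Set α}
    (h : Shatters (N '' T) C) {a b c : α} (ha : a ∈ C) (hb : b ∈ C) (hc : c ∈ C)
    (hab : a ≠ b) (hbc : b ≠ c) : (f a - f b) * (f b - f c) < 0 := by
  obtain ⟨ε, hε⟩ := hN
  obtain ⟨_, ⟨s, -, rfl⟩, hs⟩ := h {a, c} (Set.insert_subset ha (Set.singleton_subset_iff.2 hc))
  obtain ⟨_, ⟨s', -, rfl⟩, hs'⟩ := h {b} (Set.singleton_subset_iff.2 hb)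
  have hmem {x : α} (hx : x ∈ C) : x ∈ N s ↔ x = a ∨ x = c := by
    simpa [hx] using Set.ext_iff.1 hs x
  have hmem' {x : α} (hx : x ∈ C) : x ∈ N s' ↔ x = b := by
    simpa [hx] using Set.ext_iff.1 hs' x
  have has : a ∈ N s := (hmem ha).2 (Or.inl rfl)
  have hcs : c ∈ N s := (hmem hc).2 (Or.inr rfl)
  have hbs' : b ∈ N s' := (hmem' hb).2 rfl
  have has' : a ∉ N s' := mt (hmem' ha).1 hab
  have hcs' : c ∉ N s' := mt (hmem' hc).1 hbc.symm
  have hbs : b ∉ N s := by simp [hmem hb, hab.symm, hbc]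
  by_contra! hnonneg
  nlinarith [mul_pos (hε ⟨has, hbs', has', hbs⟩) (hε ⟨hbs', hcs, hbs, hcs'⟩),
    mul_nonneg (sq_nonneg (ε * (g s - g s'))) hnonneg]

theorem IsMatchingMonotone.not_shatters {f : α → ℝ} {g : β → ℝ} {N : β → Set α} {T : Set β}
    (hN : IsMatchingMonotone f g fun a s => a ∈ N s) {C : Finset α} (hC : C.card = 3) :
    ¬ Shatters (N '' T) C := by
  classical
  intro h
  obtain ⟨a, b, c, hab, hac, hbc, rfl⟩ := Finset.card_eq_three.1 hC
  have key := fun {x y z} => hN.mul_neg_of_shatters h (a := x) (b := y) (c := z)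
  have hb := key (x := a) (y := b) (z := c) (by simp) (by simp) (by simp) hab hbc
  have hc := key (x := b) (y := c) (z := a) (by simp) (by simp) (by simp) hbc hac.symm
  have ha := key (x := c) (y := a) (z := b) (by simp) (by simp) (by simp) hac.symm hab
  -- The three pairwise products of `f a - f b`, `f b - f c`, `f c - f a` cannot all be negative.
  nlinarith [mul_pos_of_neg_of_neg hb hc,
    mul_nonpos_of_nonpos_of_nonneg ha.le (sq_nonneg (f b - f c))]

theorem ncard_trace_le_of_isMatchingMonotone {f : α → ℝ} {g : β → ℝ} {N : β → Set α}
    (hN : IsMatchingMonotone f g fun a s => a ∈ N s) (T : Set β) (A : Finset α) :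
    ((· ∩ (A : Set α)) '' (N '' T)).ncard ≤ 1 + A.card + A.card.choose 2 := by
  have h := ncard_trace_le_sum_choose (F := N '' T) (A := A) (d := 2)
    fun C _ hC => hN.not_shatters hC
  simpa [Finset.sum_range_succ] using h

theorem not_shatters_iUnion {N : τ → β → Set α} {T : Set β} {A : Finset α} {𝒯 ℋ : Finset τ}
    {m : ℕ} (hsub : ℋ ⊆ 𝒯) (hFerrers : ∀ t ∈ 𝒯, t ∉ ℋ → IsFerrers fun a s => a ∈ N t s)
    (hMono : ∀ t ∈ ℋ, ∃ f g, IsMatchingMonotone f g fun a s => a ∈ N t s)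
    (hm : (1 + m + m.choose 2) ^ ℋ.card < 2 ^ m) (hA : 𝒯.card + m ≤ A.card + ℋ.card) :
    ¬ Shatters ((fun s => ⋃ t ∈ 𝒯, N t s) '' T) A := by
  classical
  intro h
  have hcard : (𝒯 \ ℋ).card + ℋ.card = 𝒯.card := Finset.card_sdiff_add_card_eq_card hsub
  have hsplit (s : β) : ⋃ t ∈ 𝒯, N t s = (⋃ t ∈ 𝒯 \ ℋ, N t s) ∪ ⋃ t ∈ ℋ, N t s := by
    rw [← Finset.set_biUnion_union, Finset.sdiff_union_of_subset hsub]
  simp only [hsplit] at h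
  obtain ⟨D, -, hD, hshatD⟩ := exists_subset_shatters_of_isFerrers
    (fun t ht => hFerrers t (Finset.mem_sdiff.1 ht).1 (Finset.mem_sdiff.1 ht).2) (by omega) h
  obtain ⟨E, hED, rfl⟩ := Finset.exists_subset_card_eq (show m ≤ D.card by omega)
  have hshatE : Shatters ((fun s => ⋃ t ∈ ℋ, N t s) '' T) E := hshatD.mono hED
  refine hm.not_ge (hshatE.two_pow_card_le_ncard_trace.trans (ncard_trace_iUnion_le fun t ht => ?_))
  obtain ⟨f, g, hfg⟩ := hMono t ht
  exact ncard_trace_le_of_isMatchingMonotone hfg T E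

end InducedMatchings

section Crossings

namespace CoordRel

/-- The counterpart of `CoordRel.holds` for two reals known only by their side of a cut, where
`true` is the upper side. -/
def Forces : CoordRel → Bool → Bool → Prop
  | .lt, a, b => a < b
  | .gt, a, b => b < a
  | .top, _, _ => True

/-- The side of the cut `v` on which `x` lies. The value `v` itself counts as a lower one for `lt`
and as an upper one otherwise, so that a pair on forced sides is related even if the first of the
two is only known to satisfy a weak inequality with `v`, see `respects_of_onSide`. -/
noncomputable def side : CoordRel → ℝ → ℝ → Bool
  | .lt, v, x => decide (v < x)
  | _, v, x => decide (v ≤ x)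

/-- `x` lies weakly on the given side of the cut `v`; `v` itself lies on both. -/
def OnSide : Bool → ℝ → ℝ → Prop
  | false, v, x => x ≤ v
  | true, v, x => v ≤ x

/-- The sides `α` and `β` assigned to `x` and `y` are consistent with the relation `c`: forced sides
relate `x` to `y`, and a related pair on different sides is forced. -/
def Respects (c : CoordRel) (x y : ℝ) (α β : Bool) : Prop :=
  (c.Forces α β → c.holds x y) ∧ (c.holds x y → α ≠ β → c.Forces α β)

/-- The sign of the order on `ℝ` that a coordinate relation expresses. It is `0` for `top`, which no
pair violates. -/
def sign : CoordRel → ℝ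
  | .lt => 1
  | .gt => -1
  | .top => 0

theorem Forces.exchange {c : CoordRel} {α₁ α₂ β₁ β₂ : Bool} (h₁ : c.Forces α₁ β₁)
    (h₂ : c.Forces α₂ β₂) : c.Forces α₁ β₂ := by
  cases c <;> grind [Forces, Bool.lt_iff]

theorem isFerrers_holds (c : CoordRel) : IsFerrers c.holds := by
  rintro x₁ x₂ y₁ y₂ ⟨h₁, h₂, h₁₂, h₂₁⟩
  cases c <;> grind [holds]

theorem sign_mul_sub_pos {c : CoordRel} {x₁ x₂ y₁ y₂ : ℝ} (h₁ : c.holds x₁ y₁)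
    (h₂ : c.holds x₂ y₂) (h₁₂ : ¬ c.holds x₁ y₂) :
    0 < c.sign * (x₁ - x₂) ∧ 0 < c.sign * (y₁ - y₂) := by
  cases c <;> simp only [holds, sign, not_lt, not_true_eq_false] at * <;> constructor <;> linarith

theorem respects_side (c d : CoordRel) (v x y : ℝ) :
    c.Respects x y (d.side v x) (d.side v y) := by
  cases c <;> cases d <;> grind [Respects, Forces, holds, side, Bool.lt_iff]

theorem respects_of_onSide (c : CoordRel) {α : Bool} {v x : ℝ} (h : OnSide α v x) (y : ℝ) :
    c.Respects x y α (c.side v y) := by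
  cases c <;> cases α <;> grind [Respects, Forces, holds, side, OnSide, Bool.lt_iff]

end CoordRel

open CoordRel

/-- Whenever a sequence of four sides starts at `α`, ends at `!α` and changes sides only where this
is forced, `L` contains a link whose relation is forced by the sides of its two ends. -/
def CoversCrossings (c : Fin 3 → CoordRel) (α : Bool) (L : Finset (Fin 3)) : Prop :=
  ∀ w : Fin 4 → Bool, w 0 = α → w 3 = !α →
    (∀ l : Fin 3, w l.castSucc ≠ w l.succ → (c l).Forces (w l.castSucc) (w l.succ)) →
    ∃ ℓ ∈ L, (c ℓ).Forces (w ℓ.castSucc) (w ℓ.succ)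

theorem exists_crossing (w : Fin 4 → Bool) {α : Bool} (h₀ : w 0 = α) (h₃ : w 3 = !α) :
    ∃ l : Fin 3, w l.castSucc = α ∧ w l.succ = !α := by
  revert w α
  decide

theorem coversCrossings_univ (c : Fin 3 → CoordRel) (α : Bool) :
    CoversCrossings c α Finset.univ := by
  intro w h₀ h₃ hw
  obtain ⟨l, hl, hl'⟩ := exists_crossing w h₀ h₃
  exact ⟨l, Finset.mem_univ l, hw l (by simp [hl, hl'])⟩

theorem exists_coversCrossings_singleton (c : Fin 3 → CoordRel) :
    ∃ α ℓ, CoversCrossings c α {ℓ} := by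
  classical
  by_cases htop : ∃ ℓ, c ℓ = .top
  · obtain ⟨ℓ, hℓ⟩ := htop
    exact ⟨true, ℓ, fun w _ _ _ => ⟨ℓ, Finset.mem_singleton_self ℓ, by rw [hℓ]; trivial⟩⟩
  -- One of the two directions is the forced one for at most one link, which every path going
  -- in that direction must therefore use.
  have hunique : ∃ α ℓ, ∀ l, (c l).Forces α !α → l = ℓ := by
    have hdir (l) (α) (h : (c l).Forces α !α) : decide (c l = .gt) = α := by
      cases hc : c l <;> cases α <;> grind [Forces, Bool.lt_iff]
    have hbool : ∀ b : Fin 3 → Bool, ∃ α ℓ, ∀ l, b l = α → l = ℓ := by decide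
    obtain ⟨α, ℓ, hℓ⟩ := hbool fun l => decide (c l = .gt)
    exact ⟨α, ℓ, fun l h => hℓ l (hdir l α h)⟩
  obtain ⟨α, ℓ, hℓ⟩ := hunique
  refine ⟨α, ℓ, fun w h₀ h₃ hw => ?_⟩
  obtain ⟨l, hl, hl'⟩ := exists_crossing w h₀ h₃
  have hforces := hw l (by simp [hl, hl'])
  obtain rfl : l = ℓ := hℓ l (by rwa [hl, hl'] at hforces)
  exact ⟨l, Finset.mem_singleton_self l, hforces⟩

theorem CoversCrossings.forall_holds_iff {c : Fin 3 → CoordRel} {α : Bool} {L : Finset (Fin 3)}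
    (hL : CoversCrossings c α L) {u : Fin 4 → ℝ} {w : Fin 4 → Bool} (h₀ : w 0 = α)
    (h₃ : w 3 = !α)
    (huw : ∀ l : Fin 3, (c l).Respects (u l.castSucc) (u l.succ) (w l.castSucc) (w l.succ)) :
    (∀ l : Fin 3, (c l).holds (u l.castSucc) (u l.succ)) ↔
      ∃ ℓ ∈ L, ∀ l : Fin 3, (ℓ = l → (c l).Forces (w l.castSucc) (w l.succ)) ∧
        (ℓ ≠ l → (c l).holds (u l.castSucc) (u l.succ)) := by
  constructor
  · intro h
    obtain ⟨ℓ, hℓ, hforces⟩ := hL w h₀ h₃ fun l => (huw l).2 (h l)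
    exact ⟨ℓ, hℓ, fun l => ⟨fun hl => hl ▸ hforces, fun _ => h l⟩⟩
  · rintro ⟨ℓ, -, h⟩ l
    by_cases hl : ℓ = l
    · exact (huw l).1 ((h l).1 hl)
    · exact (h l).2 hl

end Crossings

section Links

/-- The conjunction of the coordinate relations `c i`, where in the coordinates of `F` only the
sides `a u i` and `b v i` of the two points count and they have to be forced. -/
def LinkRel {ι : Type*} (c : ι → CoordRel) (F : Set ι) (a b : (ι → ℝ) → ι → Bool)
    (u v : ι → ℝ) : Prop :=
  ∀ i, (i ∈ F → (c i).Forces (a u i) (b v i)) ∧ (i ∉ F → (c i).holds (u i) (v i))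

section

variable {ι : Type*} {c : ι → CoordRel} {F : Set ι} {a b : (ι → ℝ) → ι → Bool}

theorem LinkRel.exists_not_holds {u₁ u₂ v₁ v₂ : ι → ℝ} (h₁ : LinkRel c F a b u₁ v₁)
    (h₂ : LinkRel c F a b u₂ v₂) (h₁₂ : ¬ LinkRel c F a b u₁ v₂) :
    ∃ i ∉ F, ¬ (c i).holds (u₁ i) (v₂ i) := by
  by_contra! h
  exact h₁₂ fun i => ⟨fun hi => ((h₁ i).1 hi).exchange ((h₂ i).1 hi), h i⟩

theorem IsInducedMatching.exists_ne_not_holds {u₁ u₂ v₁ v₂ : ι → ℝ}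
    (h : IsInducedMatching (LinkRel c F a b) u₁ u₂ v₁ v₂) :
    ∃ i j, i ∉ F ∧ j ∉ F ∧ i ≠ j ∧ ¬ (c i).holds (u₁ i) (v₂ i) ∧ ¬ (c j).holds (u₂ j) (v₁ j) := by
  obtain ⟨h₁, h₂, h₁₂, h₂₁⟩ := h
  obtain ⟨i, hi, hi'⟩ := h₁.exists_not_holds h₂ h₁₂
  obtain ⟨j, hj, hj'⟩ := h₂.exists_not_holds h₁ h₂₁
  refine ⟨i, j, hi, hj, ?_, hi', hj'⟩
  rintro rfl
  exact (c i).isFerrers_holds ⟨(h₁ i).2 hi, (h₂ i).2 hi, hi', hj'⟩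

theorem isFerrers_linkRel (hF : Fᶜ.Subsingleton) : IsFerrers (LinkRel c F a b) := by
  intro u₁ u₂ v₁ v₂ h
  obtain ⟨i, j, hi, hj, hij, -, -⟩ := h.exists_ne_not_holds
  exact hij (hF hi hj)

theorem isMatchingMonotone_linkRel {i j : ι} (hF : Fᶜ ⊆ {i, j}) :
    IsMatchingMonotone (· i) (· j) (LinkRel c F a b) := by
  refine ⟨-((c i).sign * (c j).sign), fun u₁ u₂ v₁ v₂ h => ?_⟩
  obtain ⟨k, l, hk, hl, hkl, hnk, hnl⟩ := h.exists_ne_not_holds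
  obtain ⟨hku, hkv⟩ := CoordRel.sign_mul_sub_pos ((h.1 k).2 hk) ((h.2.1 k).2 hk) hnk
  obtain ⟨hlu, hlv⟩ := CoordRel.sign_mul_sub_pos ((h.2.1 l).2 hl) ((h.1 l).2 hl) hnl
  rcases hF hk with rfl | rfl <;> rcases hF hl with rfl | rfl
  · exact absurd rfl hkl
  · nlinarith [mul_pos hku hlv]
  · nlinarith [mul_pos hlu hkv]
  · exact absurd rfl hkl

end

section

variable {P Q R : Set (Fin 3 → ℝ)} {d₁ d₂ d₃ : (Fin 3 → ℝ) → (Fin 3 → ℝ) → Prop}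

theorem IsInducedMatching.exists_links_of_n3 {p₁ p₂ s₁ s₂ : Fin 3 → ℝ}
    (h : IsInducedMatching (fun p s => p ∈ N3 P Q R d₁ d₂ d₃ s) p₁ p₂ s₁ s₂) :
    ∃ q₁ q₂ r₁ r₂, IsInducedMatching d₁ p₁ p₂ q₁ q₂ ∧ IsInducedMatching d₂ q₁ q₂ r₁ r₂ ∧
      IsInducedMatching d₃ r₁ r₂ s₁ s₂ := by
  obtain ⟨⟨hp₁, q₁, hq₁, r₁, hr₁, hpq₁, hqr₁, hrs₁⟩, ⟨hp₂, q₂, hq₂, r₂, hr₂, hpq₂, hqr₂, hrs₂⟩,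
    h₁₂, h₂₁⟩ := h
  refine ⟨q₁, q₂, r₁, r₂, ⟨hpq₁, hpq₂, fun h => ?_, fun h => ?_⟩,
    ⟨hqr₁, hqr₂, fun h => ?_, fun h => ?_⟩, ⟨hrs₁, hrs₂, fun h => ?_, fun h => ?_⟩⟩
  · exact h₁₂ ⟨hp₁, q₂, hq₂, r₂, hr₂, h, hqr₂, hrs₂⟩
  · exact h₂₁ ⟨hp₂, q₁, hq₁, r₁, hr₁, h, hqr₁, hrs₁⟩
  · exact h₁₂ ⟨hp₁, q₁, hq₁, r₂, hr₂, hpq₁, h, hrs₂⟩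
  · exact h₂₁ ⟨hp₂, q₂, hq₂, r₁, hr₁, hpq₂, h, hrs₁⟩
  · exact h₁₂ ⟨hp₁, q₁, hq₁, r₁, hr₁, hpq₁, hqr₁, h⟩
  · exact h₂₁ ⟨hp₂, q₂, hq₂, r₂, hr₂, hpq₂, hqr₂, h⟩

theorem isFerrers_n3 (h : IsFerrers d₁ ∨ IsFerrers d₂ ∨ IsFerrers d₃) :
    IsFerrers fun p s => p ∈ N3 P Q R d₁ d₂ d₃ s := by
  intro p₁ p₂ s₁ s₂ hm
  obtain ⟨q₁, q₂, r₁, r₂, hm₁, hm₂, hm₃⟩ := hm.exists_links_of_n3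
  exact h.elim (· hm₁) (·.elim (· hm₂) (· hm₃))

theorem isMatchingMonotone_n3 {f g h k : (Fin 3 → ℝ) → ℝ} (h₁ : IsMatchingMonotone f g d₁)
    (h₂ : IsMatchingMonotone g h d₂) (h₃ : IsMatchingMonotone h k d₃) :
    IsMatchingMonotone f k fun p s => p ∈ N3 P Q R d₁ d₂ d₃ s := by
  obtain ⟨ε₁, hε₁⟩ := h₁
  obtain ⟨ε₂, hε₂⟩ := h₂
  obtain ⟨ε₃, hε₃⟩ := h₃
  refine ⟨ε₁ * ε₂ * ε₃, fun p₁ p₂ s₁ s₂ hm => ?_⟩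
  obtain ⟨q₁, q₂, r₁, r₂, hm₁, hm₂, hm₃⟩ := hm.exists_links_of_n3
  have hprod := mul_pos (mul_pos (hε₁ hm₁) (hε₂ hm₂)) (hε₃ hm₃)
  refine pos_of_mul_pos_left (b := ((g q₁ - g q₂) * (h r₁ - h r₂)) ^ 2) ?_ (sq_nonneg _)
  convert hprod using 1
  ring

end

/-- The term of `N³` in which the link `t i` is forced in coordinate `i`. The relation `c l i` is
the one of link `l` in coordinate `i`; points are on the sides `w`, except for the first point of
the path, which is on the sides `o`. -/
def forcedN3 (P Q R : Set (Fin 3 → ℝ)) (c : Fin 3 → Fin 3 → CoordRel) (o : Fin 3 → Bool)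
    (w : (Fin 3 → ℝ) → Fin 3 → Bool) (t : Fin 3 → Fin 3) : (Fin 3 → ℝ) → Set (Fin 3 → ℝ) :=
  N3 P Q R (LinkRel (c 0) {i | t i = 0} (fun _ => o) w) (LinkRel (c 1) {i | t i = 1} w w)
    (LinkRel (c 2) {i | t i = 2} w w)

section

variable {P Q R : Set (Fin 3 → ℝ)} {c : Fin 3 → Fin 3 → CoordRel} {o : Fin 3 → Bool}
  {w : (Fin 3 → ℝ) → Fin 3 → Bool} {t : Fin 3 → Fin 3}

theorem isFerrers_forcedN3 (ht : ¬ t.Injective) :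
    IsFerrers fun p s => p ∈ forcedN3 P Q R c o w t s := by
  have hlink : ∃ l, {i | t i = l}ᶜ.Subsingleton := by
    simp only [Function.Injective, Set.Subsingleton, Set.mem_compl_iff, Set.mem_ofPred_eq] at ht ⊢
    revert t
    decide
  obtain ⟨l, hl⟩ := hlink
  apply isFerrers_n3
  fin_cases l
  · exact Or.inl (isFerrers_linkRel hl)
  · exact Or.inr (Or.inl (isFerrers_linkRel hl))
  · exact Or.inr (Or.inr (isFerrers_linkRel hl))

theorem exists_isMatchingMonotone_forcedN3 (ht : t.Injective) :
    ∃ f g, IsMatchingMonotone f g fun p s => p ∈ forcedN3 P Q R c o w t s := by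
  obtain ⟨e, rfl⟩ : ∃ e : Equiv.Perm (Fin 3), ⇑e = t :=
    ⟨Equiv.ofBijective t (Finite.injective_iff_bijective.1 ht), rfl⟩
  have hunforced {l i j : Fin 3} (h : ∀ k : Fin 3, k ≠ l → k = i ∨ k = j) :
      {k | e k = l}ᶜ ⊆ {e.symm i, e.symm j} := by
    intro k hk
    simpa [Equiv.eq_symm_apply] using h (e k) hk
  exact ⟨_, _, isMatchingMonotone_n3
    (isMatchingMonotone_linkRel (hunforced (i := 1) (j := 2) (by decide)))
    (isMatchingMonotone_linkRel (hunforced (i := 2) (j := 0) (by decide)))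
    (isMatchingMonotone_linkRel (hunforced (i := 0) (j := 1) (by decide)))⟩

end

/-- The generalized dominance relation with coordinate relations `c`. -/
def GenDom {ι : Type*} (c : ι → CoordRel) (u v : ι → ℝ) : Prop :=
  ∀ i, (c i).holds (u i) (v i)

theorem IsGenDom.exists_eq_genDom {d : (Fin 3 → ℝ) → (Fin 3 → ℝ) → Prop} (h : IsGenDom d) :
    ∃ c, d = GenDom c := by
  obtain ⟨c, hc⟩ := h
  exact ⟨c, funext₂ fun u v => propext (hc u v)⟩

/-- The sides of the cuts `v i` on which the coordinates of the point `x` lie. -/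
noncomputable def sides {ι : Type*} (c : ι → CoordRel) (v x : ι → ℝ) (i : ι) : Bool :=
  (c i).side (v i) (x i)

section

variable {c : Fin 3 → Fin 3 → CoordRel} {L : Fin 3 → Finset (Fin 3)} {o : Fin 3 → Bool}
  {v p s : Fin 3 → ℝ}

theorem genDom_path_iff (hL : ∀ i, CoversCrossings (c · i) (o i) (L i))
    (hp : ∀ i, CoordRel.OnSide (o i) (v i) (p i)) (hs : ∀ i, sides (c 0) v s i = !o i)
    (q r : Fin 3 → ℝ) :
    GenDom (c 0) p q ∧ GenDom (c 1) q r ∧ GenDom (c 2) r s ↔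
      ∃ t ∈ Fintype.piFinset L, LinkRel (c 0) {i | t i = 0} (fun _ => o) (sides (c 0) v) p q ∧
        LinkRel (c 1) {i | t i = 1} (sides (c 0) v) (sides (c 0) v) q r ∧
        LinkRel (c 2) {i | t i = 2} (sides (c 0) v) (sides (c 0) v) r s := by
  let u (i : Fin 3) : Fin 4 → ℝ := ![p i, q i, r i, s i]
  let w (i : Fin 3) : Fin 4 → Bool :=
    ![o i, sides (c 0) v q i, sides (c 0) v r i, sides (c 0) v s i]
  have hrespects (i l : Fin 3) :
      (c l i).Respects (u i l.castSucc) (u i l.succ) (w i l.castSucc) (w i l.succ) := by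
    fin_cases l
    · exact CoordRel.respects_of_onSide _ (hp i) _
    · exact CoordRel.respects_side _ _ _ _ _
    · exact CoordRel.respects_side _ _ _ _ _
  have hcoord (i : Fin 3) := (hL i).forall_holds_iff (w := w i) rfl (hs i) (hrespects i)
  constructor
  · rintro ⟨hpq, hqr, hrs⟩
    have hlinks (i l : Fin 3) : (c l i).holds (u i l.castSucc) (u i l.succ) := by
      fin_cases l
      exacts [hpq i, hqr i, hrs i]
    choose t ht h using fun i => (hcoord i).1 (hlinks i)
    exact ⟨t, Fintype.mem_piFinset.2 ht, fun i => h i 0, fun i => h i 1, fun i => h i 2⟩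
  · rintro ⟨t, ht, hpq, hqr, hrs⟩
    have hlinks (i : Fin 3) := (hcoord i).2 ⟨t i, Fintype.mem_piFinset.1 ht i, by
      intro l
      fin_cases l
      exacts [hpq i, hqr i, hrs i]⟩
    exact ⟨fun i => hlinks i 0, fun i => hlinks i 1, fun i => hlinks i 2⟩

theorem mem_n3_genDom_iff {P Q R : Set (Fin 3 → ℝ)}
    (hL : ∀ i, CoversCrossings (c · i) (o i) (L i))
    (hp : ∀ i, CoordRel.OnSide (o i) (v i) (p i)) (hs : ∀ i, sides (c 0) v s i = !o i) :
    p ∈ N3 P Q R (GenDom (c 0)) (GenDom (c 1)) (GenDom (c 2)) s ↔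
      p ∈ ⋃ t ∈ Fintype.piFinset L, forcedN3 P Q R c o (sides (c 0) v) t s := by
  simp only [N3, forcedN3, Set.mem_iUnion, Set.mem_ofPred_eq, exists_prop,
    genDom_path_iff hL hp hs]
  grind

end

end Links

section Cuts

variable {α β : Type*}

theorem exists_cut_of_le_card (f : α → ℝ) (A : Finset α) {a : ℕ} (ha : a ≤ A.card) :
    ∃ v, ∃ B ⊆ A, B.card = a ∧ (∀ x ∈ B, f x ≤ v) ∧ ∀ x ∈ A, x ∉ B → v ≤ f x := by
  classical
  induction a with
  | zero =>
    obtain ⟨v, hv⟩ := (A.finite_toSet.image f).bddBelow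
    exact ⟨v, ∅, A.empty_subset, rfl, by simp, fun x hx _ => hv ⟨x, hx, rfl⟩⟩
  | succ a ih =>
    obtain ⟨v, B, hBA, hB, hBv, hvA⟩ := ih (by omega)
    obtain ⟨x, hx, hmin⟩ := (A \ B).exists_min_image f
      (Finset.sdiff_nonempty_of_card_lt_card (by omega))
    simp only [Finset.mem_sdiff] at hx hmin
    refine ⟨f x, insert x B, Finset.insert_subset hx.1 hBA, ?_, ?_, ?_⟩
    · rw [Finset.card_insert_of_notMem hx.2, hB]
    · exact Finset.forall_mem_insert _ _ _ |>.2
        ⟨le_rfl, fun z hz => (hBv z hz).trans (hvA x hx.1 hx.2)⟩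
    · exact fun z hz hzB => hmin z ⟨hz, fun h => hzB (Finset.mem_insert_of_mem h)⟩

open CoordRel

theorem Shatters.exists_cut {N : β → Set α} {T : Set β} {A : Finset α}
    (h : Shatters (N '' T) A) (c : CoordRel) (x : α → ℝ) (y : β → ℝ) {k : Bool → ℕ}
    (hk : ∑ b, k b ≤ A.card) :
    ∃ v b, ∃ A' ⊆ A, ∃ T' ⊆ T, k b ≤ A'.card ∧ Shatters (N '' T') A' ∧
      (∀ a ∈ A', OnSide b v (x a)) ∧ ∀ s ∈ T', c.side v (y s) = !b := by
  classical
  rw [Fintype.sum_bool] at hk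
  obtain ⟨v, B, hBA, hB, hBv, hvA⟩ := exists_cut_of_le_card x A (a := k false) (by omega)
  have hcard := Finset.card_sdiff_add_card_eq_card hBA
  have hT : N '' T ⊆ N '' {s ∈ T | c.side v (y s) = true} ∪
      N '' {s ∈ T | c.side v (y s) = false} := by
    rw [← Set.image_union]
    refine Set.image_mono fun s hs => ?_
    cases hside : c.side v (y s)
    exacts [Or.inr ⟨hs, hside⟩, Or.inl ⟨hs, hside⟩]
  rcases h.or_of_subset_union hT (Finset.coe_subset.2 hBA)
    (Finset.coe_subset.2 Finset.sdiff_subset) (Finset.disjoint_coe.2 Finset.disjoint_sdiff)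
    with h | h
  · exact ⟨v, false, B, hBA, _, Set.sep_subset _ _, hB.ge, h, hBv, fun s hs => hs.2⟩
  · refine ⟨v, true, A \ B, Finset.sdiff_subset, _, Set.sep_subset _ _, by omega, h,
      fun a ha => ?_, fun s hs => hs.2⟩
    exact hvA a (Finset.mem_sdiff.1 ha).1 (Finset.mem_sdiff.1 ha).2

theorem Shatters.exists_octant {N : β → Set α} {T : Set β} {A : Finset α} {n : ℕ}
    (h : Shatters (N '' T) A) (c : Fin n → CoordRel) (x : α → Fin n → ℝ) (y : β → Fin n → ℝ)
    {k : (Fin n → Bool) → ℕ} (hk : ∑ o, k o ≤ A.card) :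
    ∃ (v : Fin n → ℝ) (o : Fin n → Bool), ∃ A' ⊆ A, ∃ T' ⊆ T,
      k o ≤ A'.card ∧ Shatters (N '' T') A' ∧
      (∀ a ∈ A', ∀ i, OnSide (o i) (v i) (x a i)) ∧
      ∀ s ∈ T', ∀ i, (c i).side (v i) (y s i) = !o i := by
  induction n generalizing T A with
  | zero =>
    exact ⟨default, _, A, subset_rfl, T, subset_rfl, (Fintype.sum_unique k).ge.trans hk, h,
      fun _ _ i => i.elim0, fun _ _ i => i.elim0⟩
  | succ n ih =>
    have hsum : ∑ o, k o = ∑ b, ∑ o : Fin n → Bool, k (Fin.cons b o) := by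
      rw [← (Fin.consEquiv fun _ => Bool).sum_comp, Fintype.sum_prod_type]
      rfl
    obtain ⟨v₀, b, A₁, hA₁, T₁, hT₁, hk₁, h₁, hx₁, hy₁⟩ :=
      h.exists_cut (c 0) (x · 0) (y · 0) (hsum ▸ hk)
    obtain ⟨v, o, A', hA', T', hT', hk', h', hx', hy'⟩ :=
      ih h₁ (Fin.tail c) (fun a => Fin.tail (x a)) (fun s => Fin.tail (y s)) hk₁
    refine ⟨Fin.cons v₀ v, Fin.cons b o, A', hA'.trans hA₁, T', hT'.trans hT₁, hk', h',
      fun a ha => Fin.forall_fin_succ.2 ⟨hx₁ a (hA' ha), hx' a ha⟩,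
      fun s hs => Fin.forall_fin_succ.2 ⟨hy₁ s (hT' hs), hy' s hs⟩⟩

end Cuts

section Counting

open scoped Nat

/-- For `j ≤ 3`, the least `m` such that `m` points are too many to be shattered by a union of `j !`
matching monotone relations, by the count in `pow_factorial_lt_two_pow`. -/
def monotoneThreshold : ℕ → ℕ
  | 0 | 1 => 3
  | 2 => 14
  | _ => 67

/-- The number of points that rules out shattering in an octant where `j` coordinates allow any of
the three links to be forced and the others only one: of the `3 ^ j` terms all but at most `j !`
are Ferrers relations, each of which costs one point. -/
def octantThreshold (j : ℕ) : ℕ :=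
  3 ^ j - j ! + monotoneThreshold j

theorem pow_factorial_lt_two_pow {j : ℕ} (hj : j ≤ 3) :
    (1 + monotoneThreshold j + (monotoneThreshold j).choose 2) ^ j ! < 2 ^ monotoneThreshold j := by
  interval_cases j <;> decide

theorem factorial_le_three_pow {j : ℕ} (hj : j ≤ 3) : j ! ≤ 3 ^ j := by
  interval_cases j <;> decide

/-- The links that may be forced in each coordinate: any of them in the coordinates of `J`, only
`ℓ i` in the other coordinates. -/
def linkChoices (J : Finset (Fin 3)) (ℓ : Fin 3 → Fin 3) (i : Fin 3) : Finset (Fin 3) :=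
  if i ∈ J then Finset.univ else {ℓ i}

theorem card_piFinset_linkChoices (J : Finset (Fin 3)) (ℓ : Fin 3 → Fin 3) :
    (Fintype.piFinset (linkChoices J ℓ)).card = 3 ^ J.card := by
  simp [linkChoices, Fintype.card_piFinset, apply_ite Finset.card]

theorem card_injective_linkChoices_le (J : Finset (Fin 3)) (ℓ : Fin 3 → Fin 3) :
    {t ∈ Fintype.piFinset (linkChoices J ℓ) | t.Injective}.card ≤ J.card ! := by
  revert J ℓ
  decide +kernel

theorem sum_octantThreshold (α : Fin 3 → Bool) :
    ∑ o : Fin 3 → Bool, octantThreshold ({i | o i ≠ α i} : Finset (Fin 3)).card = 169 := by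
  revert α
  decide +kernel

end Counting

section Main

variable {P Q R : Set (Fin 3 → ℝ)} {c : Fin 3 → Fin 3 → CoordRel}

theorem coversCrossings_linkChoices {α : Fin 3 → Bool} {ℓ : Fin 3 → Fin 3}
    (hcov : ∀ i, CoversCrossings (c · i) (α i) {ℓ i}) (o : Fin 3 → Bool) (i : Fin 3) :
    CoversCrossings (c · i) (o i) (linkChoices {i | o i ≠ α i} ℓ i) := by
  by_cases ho : o i = α i
  · simpa [linkChoices, ho] using hcov i
  · simpa [linkChoices, ho] using coversCrossings_univ (c · i) (o i)

theorem not_shatters_forcedN3 (J : Finset (Fin 3)) (ℓ : Fin 3 → Fin 3) {o : Fin 3 → Bool}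
    {w : (Fin 3 → ℝ) → Fin 3 → Bool} {A : Finset (Fin 3 → ℝ)} {T : Set (Fin 3 → ℝ)}
    (hA : octantThreshold J.card ≤ A.card) :
    ¬ Shatters
      ((fun s => ⋃ t ∈ Fintype.piFinset (linkChoices J ℓ), forcedN3 P Q R c o w t s) '' T) A := by
  have hJ : J.card ≤ 3 := Finset.card_le_univ J
  have hle := factorial_le_three_pow hJ
  -- Ferrers relations are matching monotone, so exactly `J.card !` terms may be taken as such.
  obtain ⟨ℋ, hinj, hsub, hℋ⟩ := Finset.exists_subsuperset_card_eq
    (Finset.filter_subset _ _) (card_injective_linkChoices_le J ℓ)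
    (hle.trans_eq (card_piFinset_linkChoices J ℓ).symm)
  refine not_shatters_iUnion hsub (fun t ht htℋ => isFerrers_forcedN3 fun ht' => ?_)
    (fun t _ => ?_) (m := monotoneThreshold J.card) ?_ ?_
  · exact htℋ (hinj (Finset.mem_filter.2 ⟨ht, ht'⟩))
  · by_cases ht : t.Injective
    · exact exists_isMatchingMonotone_forcedN3 ht
    · exact ⟨0, 0, (isFerrers_forcedN3 ht).isMatchingMonotone 0 0⟩
  · rw [hℋ]
    exact pow_factorial_lt_two_pow hJ
  · rw [hℋ, card_piFinset_linkChoices]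
    unfold octantThreshold at hA
    omega

theorem not_shatters_n3_genDom {A : Finset (Fin 3 → ℝ)} (hA : A.card = 169)
    (T : Set (Fin 3 → ℝ)) :
    ¬ Shatters (N3 P Q R (GenDom (c 0)) (GenDom (c 1)) (GenDom (c 2)) '' T) A := by
  intro h
  choose α ℓ hcov using fun i => exists_coversCrossings_singleton (c · i)
  obtain ⟨v, o, A', -, T', -, hcard, h', hp, hs⟩ :=
    h.exists_octant (c 0) id id ((sum_octantThreshold α).trans hA.symm).le
  have htrace (s) (hsT : s ∈ T') :
      N3 P Q R (GenDom (c 0)) (GenDom (c 1)) (GenDom (c 2)) s ∩ A' =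
        (⋃ t ∈ Fintype.piFinset (linkChoices {i | o i ≠ α i} ℓ),
          forcedN3 P Q R c o (sides (c 0) v) t s) ∩ A' :=
    Set.ext fun p => and_congr_left fun hpA =>
      mem_n3_genDom_iff (coversCrossings_linkChoices hcov o) (hp p hpA) (hs s hsT)
  exact not_shatters_forcedN3 _ ℓ hcard (h'.image_congr htrace)

end Main

theorem stmt16_general (P Q R S : Set (Fin 3 → ℝ)) (hP : P.Finite)
    (d₁ d₂ d₃ : (Fin 3 → ℝ) → (Fin 3 → ℝ) → Prop)
    (h₁ : IsGenDom d₁) (h₂ : IsGenDom d₂) (h₃ : IsGenDom d₃) :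
    ((fun s => N3 P Q R d₁ d₂ d₃ s) '' S).ncard ≤ (P.ncard + 1) ^ 168 := by
  obtain ⟨c₁, rfl⟩ := h₁.exists_eq_genDom
  obtain ⟨c₂, rfl⟩ := h₂.exists_eq_genDom
  obtain ⟨c₃, rfl⟩ := h₃.exists_eq_genDom
  lift P to Finset (Fin 3 → ℝ) using hP
  set F := (fun s => N3 P Q R (GenDom c₁) (GenDom c₂) (GenDom c₃) s) '' S
  have htrace : (· ∩ (P : Set (Fin 3 → ℝ))) '' F = F := by
    refine (Set.image_congr ?_).trans (Set.image_id F)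
    rintro _ ⟨s, -, rfl⟩
    exact Set.inter_eq_left.2 fun p hp => hp.1
  calc F.ncard
      = ((· ∩ (P : Set (Fin 3 → ℝ))) '' F).ncard := by rw [htrace]
    _ ≤ ∑ k ∈ Finset.range (168 + 1), P.card.choose k :=
        ncard_trace_le_sum_choose fun A _ hA =>
          not_shatters_n3_genDom (c := ![c₁, c₂, c₃]) hA S
    _ ≤ (P.card + 1) ^ 168 := sum_range_choose_le_pow _ _
    _ = ((P : Set (Fin 3 → ℝ)).ncard + 1) ^ 168 := by rw [Set.ncard_coe_finset]

theorem stmt16 (P Q R S : Set (Fin 3 → ℝ))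
    (hP : P.Finite) (hQ : Q.Finite) (hR : R.Finite) (hS : S.Finite)
    (hdistinct : ∀ x ∈ P ∪ Q ∪ R ∪ S, ∀ y ∈ P ∪ Q ∪ R ∪ S, x ≠ y → ∀ i, x i ≠ y i)
    (d₁ d₂ d₃ : (Fin 3 → ℝ) → (Fin 3 → ℝ) → Prop)
    (h₁ : IsGenDom d₁) (h₂ : IsGenDom d₂) (h₃ : IsGenDom d₃) :
    ((fun s => N3 P Q R d₁ d₂ d₃ s) '' S).ncard ≤ (P.ncard + 1) ^ 171 :=
  (stmt16_general P Q R S hP d₁ d₂ d₃ h₁ h₂ h₃).trans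
    (Nat.pow_le_pow_right (Nat.succ_pos _) (by norm_num))
end

section
/- There exists a positive integer k (an absolute constant) such that the following holds. Let P, Q, R, S ⊆ ℝ³ be finite sets such that for every two distinct points x, y of P ∪ Q ∪ R ∪ S and every coordinate i ∈ {1,2,3}, xᵢ − yᵢ ∉ {−1, 0, 1}. For each s ∈ S define N³[s] = {p ∈ P : ∃ q ∈ Q and r ∈ R with □(p) ∩ □(q) ≠ ∅, □(q) ∩ □(r) ≠ ∅, and □(r) ∩ □(s) ≠ ∅}. Then the number of distinct sets in {N³[s] : s ∈ S} is at most (|P| + 1)^k. In particular, the VC-dimension of the set system (P, {N³[s] : s ∈ S}) is bounded by an absolute constant independent of P, Q, R, S. -/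
/-- The closed axis-parallel cube of side length 1 centered at `p ∈ ℝ³`. -/
def cube (p : Fin 3 → ℝ) : Set (Fin 3 → ℝ) :=
  {x | ∀ i, |x i - p i| ≤ 1 / 2}

/-- `N³[s] = {p ∈ P : ∃ q ∈ Q, r ∈ R with □(p) ∩ □(q) ≠ ∅, □(q) ∩ □(r) ≠ ∅,
and □(r) ∩ □(s) ≠ ∅}`. -/
def N3cube (P Q R : Set (Fin 3 → ℝ)) (s : Fin 3 → ℝ) : Set (Fin 3 → ℝ) :=
  {p ∈ P | ∃ q ∈ Q, ∃ r ∈ R,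
    (cube p ∩ cube q).Nonempty ∧ (cube q ∩ cube r).Nonempty ∧ (cube r ∩ cube s).Nonempty}

/-!
Two cubes intersect iff their centers are at distance at most `1` in the sup norm, which in each
coordinate is a condition on the difference of the integer parts and the order of the fractional
parts. Up to polynomially many choices we may fix, for all points of a path `p, q, r, s`, the
integer parts and, in each coordinate, whether the fractional part of each of `p, q, r` lies in the
same gap between fractional parts of points of `P` as that of `s`.

Suppose that in such a class `p ∈ N³[s] \ N³[s']` and `p' ∈ N³[s'] \ N³[s]`. Then the two witnessing
paths are non-adjacent across each of the three levels, and every level has two coordinates in which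
the paths are ordered oppositely relative to the integer shifts. As there are only three
coordinates, this determines a coordinate `a` used by the first two levels and a coordinate `b` used
by the last two, which depend only on the class, and the order of `p, p'` in coordinate `a` becomes
a function of the order of `s, s'` in coordinate `b`. A set system with such a sign pattern shatters
no three points. Sauer's lemma bounds each class, and summing over the classes gives a polynomial
bound, which in turn bounds the VC-dimension.
-/

open Set Finset

section SetSystems

variable {α σ τ : Type*}

lemma Shatters.mono_s17 {F : Set (Set α)} {A B : Set α} (hA : Shatters F A) (hBA : B ⊆ A) :
    Shatters F B := by
  intro C hCB
  obtain ⟨t, htF, htA⟩ := hA C (hCB.trans hBA)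
  refine ⟨t, htF, ?_⟩
  rw [← inter_eq_self_of_subset_right hBA, ← inter_assoc, htA, inter_eq_left.mpr hCB]

lemma Shatters.two_pow_ncard_le {F : Set (Set α)} {A : Set α} (hA : Shatters F A)
    (hfin : A.Finite) : 2 ^ A.ncard ≤ ((· ∩ A) '' F).ncard := by
  rw [← ncard_powerset A hfin]
  refine ncard_le_ncard hA (hfin.finite_subsets.subset ?_)
  rintro _ ⟨t, -, rfl⟩
  exact inter_subset_right

lemma sum_range_choose_le_add_one_pow (n d : ℕ) :
    ∑ i ∈ range (d + 1), n.choose i ≤ (n + 1) ^ d := by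
  rw [add_pow]
  refine Finset.sum_le_sum fun i hi ↦ ?_
  rw [one_pow, mul_one]
  exact (n.choose_le_pow i).trans <| Nat.le_mul_of_pos_right _ <|
    Nat.choose_pos (Finset.mem_range_succ_iff.mp hi)

lemma card_le_add_one_pow_of_shatters [DecidableEq α] {P : Finset α} {𝒜 : Finset (Finset α)}
    {d : ℕ} (h𝒜 : 𝒜 ⊆ P.powerset) (hd : ∀ A, 𝒜.Shatters A → #A ≤ d) :
    #𝒜 ≤ (#P + 1) ^ d := by
  have hsub : 𝒜.shatterer ⊆ (range (d + 1)).biUnion fun i ↦ P.powersetCard i := by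
    intro A hA
    have hAs := mem_shatterer.mp hA
    obtain ⟨t, ht, hAt⟩ := hAs.exists_superset
    exact Finset.mem_biUnion.mpr ⟨#A, Finset.mem_range_succ_iff.mpr (hd A hAs),
      mem_powersetCard.mpr ⟨hAt.trans (Finset.mem_powerset.mp (h𝒜 ht)), rfl⟩⟩
  calc #𝒜 ≤ #𝒜.shatterer := card_le_card_shatterer 𝒜
    _ ≤ ∑ i ∈ range (d + 1), #(P.powersetCard i) := (Finset.card_le_card hsub).trans card_biUnion_le
    _ = ∑ i ∈ range (d + 1), (#P).choose i := by simp only [card_powersetCard]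
    _ ≤ (#P + 1) ^ d := sum_range_choose_le_add_one_pow _ _

lemma encard_le_add_one_pow_of_shatters {P : Finset α} {F : Set (Set α)} {d : ℕ}
    (hF : ∀ t ∈ F, t ⊆ P) (hd : ∀ A, Shatters F A → A.encard ≤ d) :
    F.encard ≤ (#P + 1) ^ d := by
  classical
  set 𝒜 : Finset (Finset α) := {t ∈ P.powerset | (t : Set α) ∈ F} with h𝒜
  have hF𝒜 : F ⊆ (fun t : Finset α ↦ (t : Set α)) '' 𝒜 := by
    intro t ht
    lift t to Finset α using P.finite_toSet.subset (hF t ht)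
    exact ⟨t, by simpa [h𝒜, ht] using hF t ht, rfl⟩
  have hd𝒜 (A : Finset α) (hA : 𝒜.Shatters A) : #A ≤ d := by
    suffices Shatters F A by simpa using hd A this
    intro B hBA
    lift B to Finset α using A.finite_toSet.subset hBA
    obtain ⟨t, ht, htB⟩ := hA (Finset.coe_subset.mp hBA)
    exact ⟨t, (Finset.mem_filter.mp ht).2, by rw [inter_comm, ← htB, Finset.coe_inter]⟩
  calc F.encard ≤ #𝒜 := by
        rw [← encard_coe_eq_coe_finsetCard]
        exact (encard_le_encard hF𝒜).trans (encard_image_le _ _)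
    _ ≤ (#P + 1) ^ d := mod_cast card_le_add_one_pow_of_shatters (filter_subset _ _) hd𝒜

lemma exists_forall_le_of_two_pow_le_add_one_pow (k : ℕ) :
    ∃ c : ℕ, ∀ n : ℕ, 2 ^ n ≤ (n + 1) ^ k → n ≤ c := by
  have hlim := (tendsto_pow_const_div_const_pow_of_one_lt k (one_lt_two (α := ℝ))).comp
    (Filter.tendsto_add_atTop_nat 1)
  obtain ⟨c, hc⟩ := Filter.eventually_atTop.mp
    (hlim.eventually (gt_mem_nhds (show (0 : ℝ) < 1 / 2 by norm_num)))
  refine ⟨c, fun n hn ↦ ?_⟩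
  by_contra! hcn
  have hlt : ((n + 1 : ℕ) : ℝ) ^ k / 2 ^ (n + 1) < 1 / 2 := hc n hcn.le
  rw [div_lt_iff₀ (by positivity), pow_succ] at hlt
  have hle : (2 : ℝ) ^ n ≤ ((n + 1 : ℕ) : ℝ) ^ k := mod_cast hn
  linarith

lemma exists_forall_shatters_encard_le (k : ℕ) :
    ∃ c : ℕ, ∀ F : Set (Set α),
      (∀ B : Set α, B.Finite → ((· ∩ B) '' F).ncard ≤ (B.ncard + 1) ^ k) →
      ∀ A, Shatters F A → A.encard ≤ c := by
  obtain ⟨c, hc⟩ := exists_forall_le_of_two_pow_le_add_one_pow k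
  refine ⟨c, fun F hF A hA ↦ ?_⟩
  by_contra! hcA
  obtain ⟨B, hBA, hB⟩ := exists_subset_encard_eq (Order.add_one_le_of_lt hcA)
  have hBfin : B.Finite := finite_of_encard_eq_coe (k := c + 1) (mod_cast hB)
  have hBc : B.ncard = c + 1 := by rw [ncard, hB]; rfl
  have := hc B.ncard (((hA.mono_s17 hBA).two_pow_ncard_le hBfin).trans (hF B hBfin))
  omega

lemma encard_image_iUnion_le_prod [Fintype τ] (g : τ → σ → Set α) (S : Set σ) :
    ((fun s ↦ ⋃ t, g t s) '' S).encard ≤ ∏ t, (g t '' S).encard := by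
  rw [← encard_pi_eq_prod_encard]
  refine (encard_le_encard ?_).trans (encard_image_le (fun h ↦ ⋃ t, h t) _)
  rintro _ ⟨s, hs, rfl⟩
  exact ⟨fun t ↦ g t s, fun t _ ↦ mem_image_of_mem _ hs, rfl⟩

lemma encard_image_le_card_mul_of_fibers {β κ : Type*} {S : Set σ} {f : σ → β} {key : σ → κ}
    {K : Finset κ} {b : ℕ∞} (hK : ∀ s ∈ S, key s ∈ K)
    (hb : ∀ k ∈ K, (f '' {s ∈ S | key s = k}).encard ≤ b) : (f '' S).encard ≤ #K * b := by
  have hsub : f '' S ⊆ ⋃ k ∈ K, f '' {s ∈ S | key s = k} := by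
    rintro _ ⟨s, hs, rfl⟩
    exact mem_biUnion (hK s hs) ⟨s, ⟨hs, rfl⟩, rfl⟩
  calc (f '' S).encard ≤ ∑ k ∈ K, (f '' {s ∈ S | key s = k}).encard :=
        (encard_le_encard hsub).trans (K.set_encard_biUnion_le _)
    _ ≤ #K * b := (Finset.sum_le_card_nsmul K _ b hb).trans_eq (nsmul_eq_mul _ _)

end SetSystems

section SignPatterns

variable {R : Type*} [CommRing R] [LinearOrder R] [IsStrictOrderedRing R]

lemma mul_pos_of_mul_pos_mul_pos {e u v : R} (hu : 0 < e * u) (hv : 0 < e * v) : 0 < u * v := by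
  refine pos_of_mul_pos_right (a := e ^ 2) ?_ (sq_nonneg e)
  convert mul_pos hu hv using 1
  ring

-- Sets with traces `{u, v}` and `{m}` on a shattered `{u, m, v}` put `φ m` on the same side of
-- `φ u` and of `φ v`. This cannot hold for each of three points, one of which lies in the middle.
lemma Shatters.encard_le_two {α σ : Type*} {f : σ → Set α} {S : Set σ} {A : Set α}
    (hA : Shatters (f '' S) A) (φ : α → R) (ψ : σ → R)
    (hφψ : ∀ s ∈ S, ∀ s' ∈ S, ∀ p ∈ f s \ f s', ∀ p' ∈ f s' \ f s,
      (φ p' - φ p) * (ψ s' - ψ s) < 0) :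
    A.encard ≤ 2 := by
  have not_between {m u v : α} (hm : m ∈ A) (hu : u ∈ A) (hv : v ∈ A) (hum : u ≠ m) (hvm : v ≠ m) :
      0 < (φ m - φ u) * (φ m - φ v) := by
    obtain ⟨_, ⟨s, hs, rfl⟩, hsA⟩ := hA {u, v} (by grind)
    obtain ⟨_, ⟨s', hs', rfl⟩, hsA'⟩ := hA {m} (by grind)
    simp only [Set.ext_iff, Set.mem_inter_iff, Set.mem_insert_iff, Set.mem_singleton_iff]
      at hsA hsA'
    have hneg {w : α} (hw : w ∈ A) (hwm : w ≠ m) (hwuv : w = u ∨ w = v) :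
        (φ m - φ w) * (ψ s' - ψ s) < 0 :=
      hφψ s hs s' hs' w (by grind) m (by grind)
    apply mul_pos_of_mul_pos_mul_pos (e := ψ s - ψ s')
    · linarith [hneg hu hum (.inl rfl)]
    · linarith [hneg hv hvm (.inr rfl)]
  by_contra! h2
  obtain ⟨T, hTA, hT⟩ := exists_subset_encard_eq (Order.add_one_le_of_lt h2)
  obtain ⟨x, y, z, hxy, hxz, hyz, rfl⟩ := encard_eq_three.mp (hT.trans (by norm_num))
  obtain ⟨hx, hy, hz⟩ : x ∈ A ∧ y ∈ A ∧ z ∈ A := by grind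
  have hprod := mul_pos (mul_pos (not_between hx hy hz hxy.symm hxz.symm)
    (not_between hy hx hz hxy hyz.symm)) (not_between hz hx hy hxz hyz)
  linarith [sq_nonneg ((φ x - φ y) * (φ x - φ z) * (φ y - φ z))]

end SignPatterns

section GapRank

variable {α : Type*} [LinearOrder α] {A : Set α} {x y : α}

/-- The rank of `x` among the points of the finite set `A` and the open gaps between consecutive
ones, so that two points have the same rank when they lie in the same gap of `A` or are the same
point of `A`. -/
noncomputable def gapRank (A : Set α) (x : α) : ℕ :=
  (A ∩ Set.Iio x).ncard + (A ∩ Set.Iic x).ncard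

lemma gapRank_mono (hA : A.Finite) : Monotone (gapRank A) := fun _ _ hxy ↦
  add_le_add
    (ncard_le_ncard (inter_subset_inter_right _ (Iio_subset_Iio hxy)) (hA.inter_of_left _))
    (ncard_le_ncard (inter_subset_inter_right _ (Iic_subset_Iic.mpr hxy)) (hA.inter_of_left _))

lemma gapRank_lt_gapRank (hA : A.Finite) (hxy : x < y) (h : x ∈ A ∨ y ∈ A) :
    gapRank A x < gapRank A y := by
  have hIio : A ∩ Set.Iio x ⊆ A ∩ Set.Iio y := by grind
  have hIic : A ∩ Set.Iic x ⊆ A ∩ Set.Iic y := by grind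
  rcases h with hx | hy
  · refine add_lt_add_of_lt_of_le (ncard_lt_ncard (hIio.ssubset_of_not_subset ?_)
      (hA.inter_of_left _)) (ncard_le_ncard hIic (hA.inter_of_left _))
    exact fun hsub ↦ lt_irrefl x (hsub ⟨hx, hxy⟩).2
  · refine add_lt_add_of_le_of_lt (ncard_le_ncard hIio (hA.inter_of_left _))
      (ncard_lt_ncard (hIic.ssubset_of_not_subset ?_) (hA.inter_of_left _))
    exact fun hsub ↦ hxy.not_ge (hsub ⟨hy, le_rfl⟩).2

lemma eq_of_gapRank_eq (hA : A.Finite) (hx : x ∈ A) (h : gapRank A x = gapRank A y) : x = y := by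
  rcases lt_trichotomy x y with hlt | heq | hgt
  · exact absurd h (gapRank_lt_gapRank hA hlt (.inl hx)).ne
  · exact heq
  · exact absurd h (gapRank_lt_gapRank hA hgt (.inr hx)).ne'

lemma gapRank_le (hA : A.Finite) (x : α) : gapRank A x ≤ 2 * A.ncard :=
  (add_le_add (ncard_inter_le_ncard_left A _ hA) (ncard_inter_le_ncard_left A _ hA)).trans_eq
    (two_mul _).symm

end GapRank

section Interleaved

variable {R : Type*} [CommRing R] [LinearOrder R] [IsStrictOrderedRing R]

lemma abs_sub_le_one_iff_floor_fract [FloorRing R] (x y : R) :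
    |x - y| ≤ 1 ↔ |⌊y⌋ - ⌊x⌋| ≤ 1 ∧ ((⌊y⌋ - ⌊x⌋ : ℤ) : R) * (Int.fract y - Int.fract x) ≤ 0 := by
  have hx := Int.floor_add_fract x
  have hy := Int.floor_add_fract y
  obtain ⟨d, hd⟩ : ∃ d : ℤ, ⌊y⌋ - ⌊x⌋ = d := ⟨_, rfl⟩
  have hxy : x - y = Int.fract x - Int.fract y - (d : R) := by
    rw [← hd, Int.cast_sub]
    linarith
  rw [hd, hxy, abs_le, abs_le]
  have hx0 := Int.fract_nonneg x
  have hy0 := Int.fract_nonneg y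
  have hx1 := Int.fract_lt_one x
  have hy1 := Int.fract_lt_one y
  constructor
  · rintro ⟨hl, hu⟩
    have hd_lt : d < 2 := by
      have : (d : R) < 2 := by linarith
      exact_mod_cast this
    have lt_hd : -2 < d := by
      have : (-2 : R) < d := by linarith
      exact_mod_cast this
    refine ⟨by omega, ?_⟩
    obtain rfl | rfl | rfl : d = -1 ∨ d = 0 ∨ d = 1 := by omega
    all_goals push_cast at *; linarith
  · rintro ⟨⟨hl, hu⟩, hsign⟩
    obtain rfl | rfl | rfl : d = -1 ∨ d = 0 ∨ d = 1 := by omega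
    all_goals push_cast at *; constructor <;> linarith

/-- `y ≤ x < y' ≤ x'` if `0 < e`, and the reverse `x' ≤ y' < x ≤ y` if `e < 0`. This is the
relative position of the fractional parts of two pairs of reals with the same integer parts, `e`
being the difference of the integer parts within a pair, when both pairs are at distance at most `1`
but `x` and `y'` are not. -/
def Interleaved (e x y x' y' : R) : Prop := e * y ≤ e * x ∧ e * x < e * y' ∧ e * y' ≤ e * x'

variable {e x y x' y' : R}

lemma Interleaved.mul_sub_pos (h : Interleaved e x y x' y') :
    0 < e * (x' - x) ∧ 0 < e * (y' - y) := by
  obtain ⟨hyx, hxy', hyx'⟩ := h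
  constructor <;> linarith

lemma Interleaved.le_and_le_or (h : Interleaved e x y x' y') :
    (y ≤ x ∧ x ≤ y' ∧ y' ≤ x') ∨ (x' ≤ y' ∧ y' ≤ x ∧ x ≤ y) := by
  obtain ⟨hyx, hxy', hyx'⟩ := h
  rcases lt_trichotomy e 0 with he | rfl | he
  · rw [mul_le_mul_left_of_neg he] at hyx hyx'
    exact .inr ⟨hyx', ((mul_lt_mul_left_of_neg he).mp hxy').le, hyx⟩
  · simp only [zero_mul, lt_irrefl] at hxy'
  · rw [mul_le_mul_iff_right₀ he] at hyx hyx'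
    exact .inl ⟨hyx, ((mul_lt_mul_iff_right₀ he).mp hxy').le, hyx'⟩

lemma Interleaved.mem_iff {U : Set R} (h : Interleaved e x y x' y') (hU : U.OrdConnected)
    (hx : x ∈ U ↔ x' ∈ U) (hy : y ∈ U ↔ y' ∈ U) : x ∈ U ↔ y ∈ U := by
  rcases h.le_and_le_or with ⟨hyx, hxy', hyx'⟩ | ⟨hxy', hyx', hxy⟩
  · exact ⟨fun hxU ↦ hy.mpr (hU.out hxU (hx.mp hxU) ⟨hxy', hyx'⟩),
      fun hyU ↦ hU.out hyU (hy.mp hyU) ⟨hyx, hxy'⟩⟩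
  · exact ⟨fun hxU ↦ hy.mpr (hU.out (hx.mp hxU) hxU ⟨hxy', hyx'⟩),
      fun hyU ↦ hU.out (hy.mp hyU) hyU ⟨hyx', hxy⟩⟩

end Interleaved

section Crowns

/-- The points with integer parts `n` whose fractional parts lie in the zones `U i` exactly for the
coordinates `i ∈ Z`. -/
def cell {ι : Type*} (U : ι → Set ℝ) (n : ι → ℤ) (Z : Finset ι) : Set (ι → ℝ) :=
  {x | ∀ i, ⌊x i⌋ = n i ∧ (Int.fract (x i) ∈ U i ↔ i ∈ Z)}

section TwoLevels

variable {ι : Type*} [Fintype ι] {U : ι → Set ℝ} {n m : ι → ℤ} {Z W : Finset ι}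
  {x y x' y' : ι → ℝ}

lemma exists_interleaved_fract (hx : ∀ i, ⌊x i⌋ = n i) (hx' : ∀ i, ⌊x' i⌋ = n i)
    (hy : ∀ i, ⌊y i⌋ = m i) (hy' : ∀ i, ⌊y' i⌋ = m i)
    (hxy : dist x y ≤ 1) (hxy' : dist x' y' ≤ 1) (hcross : ¬ dist x y' ≤ 1) :
    ∃ i, Interleaved ((m i - n i : ℤ) : ℝ) (Int.fract (x i)) (Int.fract (y i))
      (Int.fract (x' i)) (Int.fract (y' i)) := by
  simp only [dist_pi_le_iff zero_le_one, Real.dist_eq, abs_sub_le_one_iff_floor_fract (R := ℝ),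
    hx, hx', hy, hy', not_forall] at hxy hxy' hcross
  obtain ⟨i, hi⟩ := hcross
  refine ⟨i, by linarith [(hxy i).2], ?_, by linarith [(hxy' i).2]⟩
  by_contra! hle
  exact hi ⟨(hxy i).1, by linarith⟩

lemma exists_mem_iff_and_mul_sub_pos (hU : ∀ i, (U i).OrdConnected)
    (hx : x ∈ cell U n Z) (hx' : x' ∈ cell U n Z) (hy : y ∈ cell U m W) (hy' : y' ∈ cell U m W)
    (hxy : dist x y ≤ 1) (hxy' : dist x' y' ≤ 1) (hcross : ¬ dist x y' ≤ 1) :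
    ∃ i, (i ∈ Z ↔ i ∈ W) ∧
      0 < ((m i - n i : ℤ) : ℝ) * (Int.fract (x' i) - Int.fract (x i)) ∧
      0 < ((m i - n i : ℤ) : ℝ) * (Int.fract (y' i) - Int.fract (y i)) := by
  obtain ⟨i, hi⟩ := exists_interleaved_fract (fun i ↦ (hx i).1) (fun i ↦ (hx' i).1)
    (fun i ↦ (hy i).1) (fun i ↦ (hy' i).1) hxy hxy' hcross
  have hxU : Int.fract (x i) ∈ U i ↔ Int.fract (x' i) ∈ U i := (hx i).2.trans (hx' i).2.symm
  have hyU : Int.fract (y i) ∈ U i ↔ Int.fract (y' i) ∈ U i := (hy i).2.trans (hy' i).2.symm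
  exact ⟨i, (hx i).2.symm.trans ((hi.mem_iff (hU i) hxU hyU).trans (hy i).2), hi.mul_sub_pos⟩

lemma exists_crossing_coordinates (hU : ∀ i, (U i).OrdConnected)
    (hx : x ∈ cell U n Z) (hx' : x' ∈ cell U n Z) (hy : y ∈ cell U m W) (hy' : y' ∈ cell U m W)
    (hxy : dist x y ≤ 1) (hxy' : dist x' y' ≤ 1)
    (hcross : ¬ dist x y' ≤ 1) (hcross' : ¬ dist x' y ≤ 1) :
    ∃ T : Finset ι, #T = 2 ∧ (∀ i ∈ T, i ∈ Z ↔ i ∈ W) ∧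
      (∀ i ∈ T,
        0 < (Int.fract (x' i) - Int.fract (x i)) * (Int.fract (y' i) - Int.fract (y i))) ∧
      ∀ i ∈ T, ∀ j ∈ T, i ≠ j →
        ((m i - n i : ℤ) : ℝ) * (Int.fract (x' i) - Int.fract (x i)) *
          (((m j - n j : ℤ) : ℝ) * (Int.fract (y' j) - Int.fract (y j))) < 0 := by
  obtain ⟨i, hiZW, hix, hiy⟩ := exists_mem_iff_and_mul_sub_pos hU hx hx' hy hy' hxy hxy' hcross
  obtain ⟨j, hjZW, hjx, hjy⟩ := exists_mem_iff_and_mul_sub_pos hU hx' hx hy' hy hxy' hxy hcross'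
  have hij : i ≠ j := by
    rintro rfl
    linarith
  classical
  refine ⟨{i, j}, Finset.card_pair hij, ?_, ?_, ?_⟩ <;>
    simp only [Finset.mem_insert, Finset.mem_singleton, forall_eq_or_imp, forall_eq]
  · exact ⟨hiZW, hjZW⟩
  · exact ⟨mul_pos_of_mul_pos_mul_pos hix hiy,
      by linarith [mul_pos_of_mul_pos_mul_pos hjx hjy]⟩
  · exact ⟨⟨fun h ↦ absurd rfl h, fun _ ↦ mul_neg_of_pos_of_neg hix (by linarith)⟩,
      fun _ ↦ mul_neg_of_neg_of_pos (by linarith) hiy, fun h ↦ absurd rfl h⟩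

end TwoLevels

lemma exists_eq_singleton_and_eq_compl_singleton {Z W T : Finset (Fin 3)} (hZ : #Z ≤ 1)
    (hW : 2 ≤ #W) (hT : #T = 2) (hZW : ∀ i ∈ T, i ∈ Z ↔ i ∈ W) :
    ∃ a ∈ T, ∃ b ∈ T, a ≠ b ∧ Z = {b} ∧ W = {a}ᶜ := by
  decide +revert

variable {U : Fin 3 → Set ℝ} {n₁ n₂ n₃ n₄ : Fin 3 → ℤ} {Z₁ Z₂ Z₃ : Finset (Fin 3)}

-- The crossing coordinates of the first level lie outside `Z₂`, since a zone containing a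
-- fractional part of `p` has only one element, and those of the last level lie in `Z₃`.
lemma mul_neg_of_crown (hU : ∀ i, (U i).OrdConnected) {p p' q q' r r' s s' : Fin 3 → ℝ}
    (hpU : ∀ i, Int.fract (p i) ∈ U i → (U i).Subsingleton)
    (hp : p ∈ cell U n₁ Z₁) (hp' : p' ∈ cell U n₁ Z₁)
    (hq : q ∈ cell U n₂ Z₂) (hq' : q' ∈ cell U n₂ Z₂)
    (hr : r ∈ cell U n₃ Z₃) (hr' : r' ∈ cell U n₃ Z₃)
    (hs : s ∈ cell U n₄ Finset.univ) (hs' : s' ∈ cell U n₄ Finset.univ)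
    (hpq : dist p q ≤ 1) (hqr : dist q r ≤ 1) (hrs : dist r s ≤ 1)
    (hpq' : dist p' q' ≤ 1) (hqr' : dist q' r' ≤ 1) (hrs' : dist r' s' ≤ 1)
    (hp_q' : ¬ dist p q' ≤ 1) (hq_r' : ¬ dist q r' ≤ 1) (hr_s' : ¬ dist r s' ≤ 1)
    (hp'_q : ¬ dist p' q ≤ 1) (hq'_r : ¬ dist q' r ≤ 1) (hr'_s : ¬ dist r' s ≤ 1) :
    ∃ a b, Z₂ = {b} ∧ Z₃ = {a}ᶜ ∧
      (Int.fract (p' a) - Int.fract (p a)) *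
        (((n₃ a - n₂ a : ℤ) : ℝ) * ((n₃ b - n₂ b : ℤ) : ℝ) *
          (Int.fract (s' b) - Int.fract (s b))) < 0 := by
  obtain ⟨T₁, hT₁, hZ₁₂, hpq_pos, -⟩ :=
    exists_crossing_coordinates hU hp hp' hq hq' hpq hpq' hp_q' hp'_q
  obtain ⟨T₂, hT₂, hZ₂₃, -, hqr_neg⟩ :=
    exists_crossing_coordinates hU hq hq' hr hr' hqr hqr' hq_r' hq'_r
  obtain ⟨T₃, hT₃, hZ₃, hrs_pos, -⟩ :=
    exists_crossing_coordinates hU hr hr' hs hs' hrs hrs' hr_s' hr'_s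
  have hTZ₁ : Disjoint T₁ Z₂ := by
    refine Finset.disjoint_left.mpr fun i hi hiZ₂ ↦ ?_
    have hpi := (hp i).2.mpr ((hZ₁₂ i hi).mpr hiZ₂)
    have hpi' := (hp' i).2.mpr ((hZ₁₂ i hi).mpr hiZ₂)
    have hpos := hpq_pos i hi
    rw [hpU i hpi hpi hpi', sub_self, zero_mul] at hpos
    exact hpos.false
  have hTZ₃ : T₃ ⊆ Z₃ := fun i hi ↦ (hZ₃ i hi).mpr (Finset.mem_univ i)
  have hZ₂_card : #Z₂ ≤ 1 := by
    have := (Finset.card_union_of_disjoint hTZ₁).symm.trans_le (Finset.card_le_univ _)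
    rw [Fintype.card_fin] at this
    omega
  obtain ⟨a, ha, b, hb, hab, rfl, rfl⟩ := exists_eq_singleton_and_eq_compl_singleton hZ₂_card
    (hT₃.symm.trans_le (Finset.card_le_card hTZ₃)) hT₂ hZ₂₃
  have hT₁b : T₁ = {b}ᶜ := Finset.eq_of_subset_of_card_le
    (subset_compl_iff_disjoint_right.mpr hTZ₁) (by simp [Finset.card_compl, hT₁])
  have hT₃a : T₃ = {a}ᶜ := Finset.eq_of_subset_of_card_le hTZ₃ (by simp [Finset.card_compl, hT₃])
  have hpq_a := hpq_pos a (by simpa [hT₁b] using hab)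
  have hqr_ab := hqr_neg a ha b hb hab
  have hrs_b := hrs_pos b (by simpa [hT₃a] using hab.symm)
  refine ⟨a, b, rfl, rfl, ?_⟩
  refine neg_of_mul_neg_left ?_ (sq_nonneg
    ((Int.fract (q' a) - Int.fract (q a)) * (Int.fract (r' b) - Int.fract (r b))))
  convert mul_neg_of_pos_of_neg (mul_pos hpq_a hrs_b) hqr_ab using 1
  ring

end Crowns

section Cubes

lemma cube_eq_closedBall (p : Fin 3 → ℝ) : cube p = Metric.closedBall p (1 / 2) := by
  ext x
  simp [cube, dist_pi_le_iff, Real.dist_eq]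

lemma cube_inter_cube_nonempty_iff (p q : Fin 3 → ℝ) :
    (cube p ∩ cube q).Nonempty ↔ dist p q ≤ 1 := by
  rw [cube_eq_closedBall, cube_eq_closedBall, ← Set.not_disjoint_iff_nonempty_inter,
    disjoint_closedBall_closedBall_iff (by norm_num) (by norm_num), add_halves, not_lt]

lemma mem_N3cube_iff {P Q R : Set (Fin 3 → ℝ)} {p s : Fin 3 → ℝ} :
    p ∈ N3cube P Q R s ↔
      p ∈ P ∧ ∃ q ∈ Q, ∃ r ∈ R, dist p q ≤ 1 ∧ dist q r ≤ 1 ∧ dist r s ≤ 1 := by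
  simp only [N3cube, cube_inter_cube_nonempty_iff, Set.mem_ofPred_eq]

lemma N3cube_subset (P Q R : Set (Fin 3 → ℝ)) (s : Fin 3 → ℝ) : N3cube P Q R s ⊆ P :=
  sep_subset _ _

lemma N3cube_inter (P Q R A : Set (Fin 3 → ℝ)) (s : Fin 3 → ℝ) :
    N3cube P Q R s ∩ A = N3cube (P ∩ A) Q R s := by
  ext p
  simp only [Set.mem_inter_iff, mem_N3cube_iff, and_right_comm]

end Cubes

section SignPatternOfCells

variable {U : Fin 3 → Set ℝ} {n₁ n₂ n₃ n₄ : Fin 3 → ℤ} {Z₁ Z₂ Z₃ : Finset (Fin 3)}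
  {P Q R S : Set (Fin 3 → ℝ)}

lemma exists_forall_mul_neg_of_subset_cell (hU : ∀ i, (U i).OrdConnected)
    (hPU : ∀ p ∈ P, ∀ i, Int.fract (p i) ∈ U i → (U i).Subsingleton)
    (hP : P ⊆ cell U n₁ Z₁) (hQ : Q ⊆ cell U n₂ Z₂) (hR : R ⊆ cell U n₃ Z₃)
    (hS : S ⊆ cell U n₄ Finset.univ) :
    ∃ φ ψ : (Fin 3 → ℝ) → ℝ, ∀ s ∈ S, ∀ s' ∈ S,
      ∀ p ∈ N3cube P Q R s \ N3cube P Q R s', ∀ p' ∈ N3cube P Q R s' \ N3cube P Q R s,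
        (φ p' - φ p) * (ψ s' - ψ s) < 0 := by
  have crown {s s' p p' : Fin 3 → ℝ} (hs : s ∈ S) (hs' : s' ∈ S)
      (hp : p ∈ N3cube P Q R s \ N3cube P Q R s')
      (hp' : p' ∈ N3cube P Q R s' \ N3cube P Q R s) :
      ∃ a b, Z₂ = {b} ∧ Z₃ = {a}ᶜ ∧ (Int.fract (p' a) - Int.fract (p a)) *
        (((n₃ a - n₂ a : ℤ) : ℝ) * ((n₃ b - n₂ b : ℤ) : ℝ) *
          (Int.fract (s' b) - Int.fract (s b))) < 0 := by
    simp only [Set.mem_sdiff, mem_N3cube_iff, not_and, not_exists] at hp hp'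
    obtain ⟨⟨hpP, q, hq, r, hr, hpq, hqr, hrs⟩, hps'⟩ := hp
    obtain ⟨⟨hpP', q', hq', r', hr', hpq', hqr', hrs'⟩, hps⟩ := hp'
    exact mul_neg_of_crown hU (hPU p hpP) (hP hpP) (hP hpP') (hQ hq) (hQ hq') (hR hr) (hR hr')
      (hS hs) (hS hs') hpq hqr hrs hpq' hqr' hrs'
      (fun h ↦ hps' hpP q' hq' r' hr' h hqr' hrs') (fun h ↦ hps' hpP q hq r' hr' hpq h hrs')
      (fun h ↦ hps' hpP q hq r hr hpq hqr h) (fun h ↦ hps hpP' q hq r hr h hqr hrs)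
      (fun h ↦ hps hpP' q' hq' r hr hpq' h hrs) (fun h ↦ hps hpP' q' hq' r' hr' hpq' hqr' h)
  by_cases hab : ∃ a b, Z₂ = {b} ∧ Z₃ = {a}ᶜ
  · obtain ⟨a, b, rfl, rfl⟩ := hab
    refine ⟨fun p ↦ Int.fract (p a),
      fun s ↦ ((n₃ a - n₂ a : ℤ) : ℝ) * ((n₃ b - n₂ b : ℤ) : ℝ) * Int.fract (s b),
      fun s hs s' hs' p hp p' hp' ↦ ?_⟩
    obtain ⟨a', b', hb, ha, hneg⟩ := crown hs hs' hp hp'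
    obtain rfl := Finset.singleton_injective hb
    obtain rfl := Finset.singleton_injective (compl_injective ha)
    rwa [mul_sub] at hneg
  · refine ⟨0, 0, fun s hs s' hs' p hp p' hp' ↦ absurd ?_ hab⟩
    obtain ⟨a, b, hb, ha, -⟩ := crown hs hs' hp hp'
    exact ⟨a, b, hb, ha⟩

lemma encard_image_N3cube_le_of_subset_cell {P₀ : Finset (Fin 3 → ℝ)} (hPP₀ : P ⊆ P₀)
    (hU : ∀ i, (U i).OrdConnected)
    (hPU : ∀ p ∈ P, ∀ i, Int.fract (p i) ∈ U i → (U i).Subsingleton)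
    (hP : P ⊆ cell U n₁ Z₁) (hQ : Q ⊆ cell U n₂ Z₂) (hR : R ⊆ cell U n₃ Z₃)
    (hS : S ⊆ cell U n₄ Finset.univ) :
    (N3cube P Q R '' S).encard ≤ (#P₀ + 1) ^ 2 := by
  obtain ⟨φ, ψ, hφψ⟩ := exists_forall_mul_neg_of_subset_cell hU hPU hP hQ hR hS
  refine encard_le_add_one_pow_of_shatters ?_ fun A hA ↦ hA.encard_le_two φ ψ hφψ
  rintro _ ⟨s, -, rfl⟩
  exact (N3cube_subset P Q R s).trans hPP₀

end SignPatternOfCells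

section Positions

variable {ι : Type*} {P : Set (ι → ℝ)} {x s : ι → ℝ}

/-- The position of `x` relative to the finite set `P`: for each coordinate, the integer part,
and the gap between the fractional parts of the points of `P` in which the fractional part lies. -/
noncomputable def position (P : Set (ι → ℝ)) (x : ι → ℝ) (i : ι) : ℤ × ℕ :=
  (⌊x i⌋, gapRank ((fun p ↦ Int.fract (p i)) '' P) (Int.fract (x i)))

/-- The fractional parts in the gap of the `i`-th coordinate of the position `κ`. If this gap
contains the fractional part of a point of `P`, the zone is a singleton. -/
def zone (P : Set (ι → ℝ)) (κ : ι → ℤ × ℕ) (i : ι) : Set ℝ :=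
  gapRank ((fun p ↦ Int.fract (p i)) '' P) ⁻¹' {(κ i).2}

/-- The cells that meet the ball of radius `3` around a given point, indexed by the difference of
the integer parts and by the set of coordinates in the same zone. -/
abbrev CellIndex (ι : Type*) : Type _ := (ι → Finset.Icc (-3 : ℤ) 3) × Finset ι

/-- The cell with index `c` relative to the points with position `κ`. -/
def relCell (P : Set (ι → ℝ)) (κ : ι → ℤ × ℕ) (c : CellIndex ι) : Set (ι → ℝ) :=
  cell (zone P κ) (fun i ↦ (κ i).1 + c.1 i) c.2

lemma zone_ordConnected (hP : P.Finite) (κ : ι → ℤ × ℕ) (i : ι) : (zone P κ i).OrdConnected :=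
  ordConnected_singleton.preimage_mono (gapRank_mono (hP.image _))

lemma zone_subsingleton (hP : P.Finite) {κ : ι → ℤ × ℕ} {p : ι → ℝ} (hp : p ∈ P) {i : ι}
    (hpi : Int.fract (p i) ∈ zone P κ i) : (zone P κ i).Subsingleton :=
  subsingleton_of_forall_eq _ fun _ ht ↦
    (eq_of_gapRank_eq (hP.image _) (mem_image_of_mem _ hp) (hpi.trans ht.symm)).symm

lemma abs_floor_sub_floor_le {a b : ℝ} {n : ℕ} (h : |a - b| ≤ n) : |⌊a⌋ - ⌊b⌋| ≤ n := by
  have floor_le {a b : ℝ} (h : a ≤ b + n) : ⌊a⌋ ≤ ⌊b⌋ + n :=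
    (Int.floor_le_floor h).trans_eq (Int.floor_add_natCast b n)
  rw [abs_le] at h ⊢
  have hab := floor_le (a := a) (b := b) (by linarith [h.2])
  have hba := floor_le (a := b) (b := a) (by linarith [h.1])
  constructor <;> omega

variable [Fintype ι]

lemma mem_cell_position : s ∈ cell (zone P (position P s)) (fun i ↦ ⌊s i⌋) Finset.univ :=
  fun i ↦ ⟨rfl, iff_of_true rfl (Finset.mem_univ i)⟩

lemma exists_mem_relCell_of_dist_le (hxs : dist x s ≤ 3) :
    ∃ c : CellIndex ι, x ∈ relCell P (position P s) c := by
  classical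
  have hfloor (i : ι) : ⌊x i⌋ - ⌊s i⌋ ∈ Finset.Icc (-3 : ℤ) 3 := by
    rw [Finset.mem_Icc, ← abs_le]
    exact abs_floor_sub_floor_le (n := 3) (mod_cast (dist_le_pi_dist x s i).trans hxs)
  refine ⟨(fun i ↦ ⟨_, hfloor i⟩,
    Finset.univ.filter fun i ↦ Int.fract (x i) ∈ zone P (position P s) i), fun i ↦ ?_⟩
  exact ⟨by simp [position], by simp⟩

end Positions

section Counting

lemma N3cube_eq_iUnion_relCell (A P Q R : Set (Fin 3 → ℝ)) (s : Fin 3 → ℝ) :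
    N3cube P Q R s = ⋃ c : CellIndex (Fin 3) × CellIndex (Fin 3) × CellIndex (Fin 3),
      N3cube (P ∩ relCell A (position A s) c.1) (Q ∩ relCell A (position A s) c.2.1)
        (R ∩ relCell A (position A s) c.2.2) s := by
  ext p
  simp only [Set.mem_iUnion, mem_N3cube_iff]
  constructor
  · rintro ⟨hp, q, hq, r, hr, hpq, hqr, hrs⟩
    have hqs : dist q s ≤ 2 := by linarith [dist_triangle q r s]
    have hps : dist p s ≤ 3 := by linarith [dist_triangle p q s]
    obtain ⟨c₁, hc₁⟩ := exists_mem_relCell_of_dist_le (P := A) hps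
    obtain ⟨c₂, hc₂⟩ := exists_mem_relCell_of_dist_le (P := A) (hqs.trans (by norm_num))
    obtain ⟨c₃, hc₃⟩ := exists_mem_relCell_of_dist_le (P := A) (hrs.trans (by norm_num))
    exact ⟨(c₁, c₂, c₃), ⟨hp, hc₁⟩, q, ⟨hq, hc₂⟩, r, ⟨hr, hc₃⟩, hpq, hqr, hrs⟩
  · rintro ⟨c, hp, q, hq, r, hr, hdist⟩
    exact ⟨hp.1, q, hq.1, r, hr.1, hdist⟩

lemma encard_image_N3cube_le_of_position_eq (P : Finset (Fin 3 → ℝ)) {Q R S : Set (Fin 3 → ℝ)}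
    {κ : Fin 3 → ℤ × ℕ} (hS : ∀ s ∈ S, position P s = κ) :
    (N3cube P Q R '' S).encard ≤ (((#P + 1) ^ 2) ^
      Fintype.card (CellIndex (Fin 3) × CellIndex (Fin 3) × CellIndex (Fin 3)) : ℕ∞) := by
  have hcell : S ⊆ cell (zone P κ) (fun i ↦ (κ i).1) Finset.univ := by
    rintro s hs
    rw [← hS s hs]
    exact mem_cell_position
  rw [image_congr fun s hs ↦ (N3cube_eq_iUnion_relCell P P Q R s).trans (by rw [hS s hs])]
  refine (encard_image_iUnion_le_prod _ S).trans (Finset.prod_le_pow_card _ _ _ fun c _ ↦ ?_)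
  exact encard_image_N3cube_le_of_subset_cell inter_subset_left
    (zone_ordConnected P.finite_toSet κ)
    (fun p hp i ↦ zone_subsingleton P.finite_toSet hp.1)
    inter_subset_right inter_subset_right inter_subset_right hcell

/-- A finite set containing the positions relative to `P` of all points at distance at most `3`
from a point of `P`. -/
noncomputable def positionsNear (P : Finset (Fin 3 → ℝ)) : Finset (Fin 3 → ℤ × ℕ) :=
  Fintype.piFinset fun i ↦
    (P.biUnion fun p ↦ Finset.Icc (⌊p i⌋ - 3) (⌊p i⌋ + 3)) ×ˢ range (2 * #P + 1)

variable {P : Finset (Fin 3 → ℝ)}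

lemma position_mem_positionsNear {p s : Fin 3 → ℝ} (hp : p ∈ P) (hps : dist p s ≤ 3) :
    position P s ∈ positionsNear P := by
  refine Fintype.mem_piFinset.mpr fun i ↦ Finset.mem_product.mpr
    ⟨Finset.mem_biUnion.mpr ⟨p, hp, ?_⟩, Finset.mem_range_succ_iff.mpr ?_⟩
  · have hfloor := abs_le.mp <|
      abs_floor_sub_floor_le (n := 3) (mod_cast (dist_le_pi_dist p s i).trans hps)
    exact Finset.mem_Icc.mpr ⟨by simp only [position]; omega, by simp only [position]; omega⟩
  · refine (gapRank_le (P.finite_toSet.image _) _).trans (Nat.mul_le_mul_left 2 ?_)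
    exact (ncard_image_le P.finite_toSet).trans_eq (ncard_coe_finset P)

lemma card_positionsNear_add_one_le (P : Finset (Fin 3 → ℝ)) :
    #(positionsNear P) + 1 ≤ (#P + 1) ^ 15 := by
  have hfactor (i : Fin 3) : #((P.biUnion fun p ↦ Finset.Icc (⌊p i⌋ - 3) (⌊p i⌋ + 3)) ×ˢ
      range (2 * #P + 1)) ≤ #P * 7 * (2 * #P + 1) := by
    rw [Finset.card_product, card_range]
    refine Nat.mul_le_mul_right _ (card_biUnion_le_card_mul _ _ _ fun p _ ↦ ?_)
    rw [Int.card_Icc]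
    omega
  have hpow (n : ℕ) : n * 7 * (2 * n + 1) + 1 ≤ (n + 1) ^ 5 := by
    rcases n.eq_zero_or_pos with rfl | hn
    · rfl
    · nlinarith [Nat.pow_le_pow_right hn (show 2 ≤ 3 by norm_num),
        Nat.pow_le_pow_right hn (show 1 ≤ 3 by norm_num), Nat.zero_le (n ^ 5 + 5 * n ^ 4)]
  calc #(positionsNear P) + 1 ≤ (#P * 7 * (2 * #P + 1)) ^ 3 + 1 := by
        rw [positionsNear, Fintype.card_piFinset]
        gcongr
        simpa using Finset.prod_le_pow_card Finset.univ _ _ fun i _ ↦ hfactor i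
    _ ≤ (#P * 7 * (2 * #P + 1) + 1) ^ 3 := by nlinarith [Nat.zero_le (#P * 7 * (2 * #P + 1))]
    _ ≤ ((#P + 1) ^ 5) ^ 3 := by gcongr; exact hpow _
    _ = (#P + 1) ^ 15 := (pow_mul _ 5 3).symm

lemma position_mem_positionsNear_of_nonempty {Q R : Set (Fin 3 → ℝ)} {s : Fin 3 → ℝ}
    (hs : (N3cube P Q R s).Nonempty) : position P s ∈ positionsNear P := by
  obtain ⟨p, hp⟩ := hs
  obtain ⟨hp, q, -, r, -, hpq, hqr, hrs⟩ := mem_N3cube_iff.mp hp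
  exact position_mem_positionsNear hp (by linarith [dist_triangle4 p q r s])

lemma exists_forall_encard_image_N3cube_le :
    ∃ k : ℕ, 0 < k ∧ ∀ (P : Finset (Fin 3 → ℝ)) (Q R S : Set (Fin 3 → ℝ)),
      (N3cube P Q R '' S).encard ≤ (#P + 1) ^ k := by
  obtain ⟨T, hT⟩ : ∃ T : ℕ, ∀ (P : Finset (Fin 3 → ℝ)) (Q R S : Set (Fin 3 → ℝ)) κ,
      (∀ s ∈ S, position P s = κ) → (N3cube P Q R '' S).encard ≤ ((#P + 1) ^ 2) ^ T :=
    ⟨_, fun P _ _ _ _ hS ↦ encard_image_N3cube_le_of_position_eq P hS⟩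
  refine ⟨15 + 2 * T, by omega, fun P Q R S ↦ ?_⟩
  set S' := {s ∈ S | (N3cube P Q R s).Nonempty}
  have hsub : N3cube P Q R '' S ⊆ insert ∅ (N3cube P Q R '' S') := by
    rintro _ ⟨s, hs, rfl⟩
    rcases (N3cube P Q R s).eq_empty_or_nonempty with hempty | hne
    · exact .inl hempty
    · exact .inr (mem_image_of_mem _ ⟨hs, hne⟩)
  have hS' : (N3cube P Q R '' S').encard ≤ #(positionsNear P) * ((#P + 1) ^ 2) ^ T :=
    encard_image_le_card_mul_of_fibers
      (fun s hs ↦ position_mem_positionsNear_of_nonempty hs.2)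
      fun κ _ ↦ hT P Q R _ κ fun s hs ↦ hs.2
  calc (N3cube P Q R '' S).encard
      ≤ #(positionsNear P) * ((#P + 1) ^ 2) ^ T + 1 :=
        (encard_le_encard hsub).trans ((encard_insert_le _ _).trans (by gcongr))
    _ ≤ (#(positionsNear P) + 1) * ((#P + 1) ^ 2) ^ T := by
        rw [add_one_mul]
        gcongr
        exact one_le_pow₀ (one_le_pow₀ le_add_self)
    _ ≤ (#P + 1) ^ 15 * ((#P + 1) ^ 2) ^ T := by
        gcongr
        exact_mod_cast card_positionsNear_add_one_le P
    _ = (#P + 1) ^ (15 + 2 * T) := by rw [← pow_mul, pow_add]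

end Counting

theorem stmt17_general :
    ∃ k c : ℕ, 0 < k ∧ ∀ P Q R S : Set (Fin 3 → ℝ),
      (P.Finite → ((fun s => N3cube P Q R s) '' S).ncard ≤ (P.ncard + 1) ^ k) ∧
      ∀ A, Shatters ((fun s => N3cube P Q R s) '' S) A → A.encard ≤ c := by
  obtain ⟨k, hk, hcount⟩ := exists_forall_encard_image_N3cube_le
  obtain ⟨c, hc⟩ := exists_forall_shatters_encard_le (α := Fin 3 → ℝ) k
  have hncard {P : Set (Fin 3 → ℝ)} (hP : P.Finite) (Q R S : Set (Fin 3 → ℝ)) :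
      (N3cube P Q R '' S).ncard ≤ (P.ncard + 1) ^ k := by
    lift P to Finset (Fin 3 → ℝ) using hP
    rw [ncard_coe_finset]
    exact (encard_le_coe_iff_finite_ncard_le.mp (mod_cast hcount P Q R S)).2
  refine ⟨k, c, hk, fun P Q R S ↦ ⟨fun hP ↦ hncard hP Q R S, hc _ fun B hB ↦ ?_⟩⟩
  simp only [image_image, N3cube_inter]
  calc (N3cube (P ∩ B) Q R '' S).ncard ≤ ((P ∩ B).ncard + 1) ^ k :=
        hncard (hB.inter_of_right P) Q R S
    _ ≤ (B.ncard + 1) ^ k := by gcongr; exact inter_subset_right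

theorem stmt17 :
    ∃ k c : ℕ, 0 < k ∧
      ∀ P Q R S : Set (Fin 3 → ℝ), P.Finite → Q.Finite → R.Finite → S.Finite →
        (∀ x ∈ P ∪ Q ∪ R ∪ S, ∀ y ∈ P ∪ Q ∪ R ∪ S, x ≠ y →
          ∀ i, x i - y i ∉ ({-1, 0, 1} : Set ℝ)) →
        ((fun s => N3cube P Q R s) '' S).ncard ≤ (P.ncard + 1) ^ k ∧
        ∀ A ⊆ P, Shatters ((fun s => N3cube P Q R s) '' S) A → A.ncard ≤ c := by
  obtain ⟨k, c, hk, h⟩ := stmt17_general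
  exact ⟨k, c, hk, fun P Q R S hP _ _ _ _ ↦ ⟨(h P Q R S).1 hP, fun A _ hA ↦
    (encard_le_coe_iff_finite_ncard_le.mp ((h P Q R S).2 A hA)).2⟩⟩
end
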